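/- arXiv:0911.5086 — 4 statements merged into one kernel-verified Lean document; each statement's English description precedes it below -/
import Mathlib

section
/- Let d ≥ 2 and m ≥ 2, let Π_1, …, Π_m be parallel hyperplanes in E^{d+1} with Π_j above Π_i for j > i, let P_i ⊂ Π_i be finite with each 𝒫_i = conv(P_i) d-dimensional, P = P_1 ∪ … ∪ P_m, 𝒫 = conv(P), 𝒫_1 = 𝒫 ∩ Π_1 and 𝒫_m = 𝒫 ∩ Π_m. Assume that every nonempty proper exposed face of 𝒫 contained neither in Π_1 nor in Π_m is a simplex, and that 𝒫_1 and 𝒫_m are simplicial d-polytopes. Let y be a point beyond the facet 𝒫_1 and beneath every other facet of 𝒫, and z a point beyond the facet 𝒫_m and beneath every other facet of 𝒫. Then Q = conv(P ∪ {y, z}) is a simplicial (d+1)-polytope, i.e., every nonempty proper exposed face of Q is a simplex. (Claim in the proof of Lemma 2.5.) -/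
/-! Let `l` expose a proper face `F` of `Q`, with maximum `c`. The vertices of `F` lie among
`y`, `z` and the vertices of `G = KP ∩ {l = c}`, which is empty or a proper face of `KP`.

* `G` is neither `KP1` nor `KPm`: `y` and `z` lie beyond these facets, so a functional that is
  maximal on `KP` exactly along one of them exceeds that maximum at `y` or at `z`
  (`face_ne_of_beyond`). Hence `G`, if nonempty, is a simplex, by one of the three simpliciality
  hypotheses.
* If `l y = c`, then `G ⊆ KP1` (`contact_subset`). Indeed, for `x ∈ G` off the hyperplane `Π₁`,
  points on the segment from `x` to `y` close to `x` are strictly beneath every facet of `KP`,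
  hence interior to `KP`; but `l` attains its maximum over `KP` there. Likewise for `z` and `KPm`.

So if `F` contains exactly one of `y` and `z`, it is a pyramid over the simplex `G` with apex off
`aff G`, and if it contains both, then `G ⊆ KP1 ∩ KPm = ∅` and `F` is the segment `[y, z]`.

The only fact from polytope theory needed is that a point strictly beneath every facet of a
full-dimensional polytope is interior (`exists_facet_of_notMem_interior`). It follows from the
existence of extreme points of the polar body: an extreme point of the polar is tight on a
spanning set of vertices, so that it defines a facet. -/

open Set Pointwise RealInnerProductSpace

/-- The dimension of the affine hull of a set. -/
noncomputable def adim {N : ℕ} (F : Set (EuclideanSpace ℝ (Fin N))) : ℕ :=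
  Module.finrank ℝ (vectorSpan ℝ F)

/-- A compact convex set is a simplex if its extreme points (vertices) are affinely
independent. -/
def IsSimplexSet {N : ℕ} (F : Set (EuclideanSpace ℝ (Fin N))) : Prop :=
  AffineIndependent ℝ ((↑) : (F.extremePoints ℝ) → EuclideanSpace ℝ (Fin N))

/-- `F` is a facet of `C`: an exposed face of dimension one less than `C`. -/
def IsFacetOf {N : ℕ} (C F : Set (EuclideanSpace ℝ (Fin N))) : Prop :=
  IsExposed ℝ C F ∧ F.Nonempty ∧ adim F + 1 = adim C

/-- `p` is beyond the facet `F` of `C`. -/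
def IsBeyond {N : ℕ} (C F : Set (EuclideanSpace ℝ (Fin N)))
    (p : EuclideanSpace ℝ (Fin N)) : Prop :=
  ∀ x ∈ C, x ∉ (affineSpan ℝ F : Set (EuclideanSpace ℝ (Fin N))) →
    (affineSpan ℝ F).SOppSide p x

/-- `p` is beneath the facet `F` of `C`. -/
def IsBeneath {N : ℕ} (C F : Set (EuclideanSpace ℝ (Fin N)))
    (p : EuclideanSpace ℝ (Fin N)) : Prop :=
  ∀ x ∈ C, x ∉ (affineSpan ℝ F : Set (EuclideanSpace ℝ (Fin N))) →
    (affineSpan ℝ F).SSameSide p x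

/-! ### Affine preliminaries -/

/-- A linear functional that is constant on a set is constant on its affine hull. -/
lemma eq_on_affineSpan {N : ℕ} (l : EuclideanSpace ℝ (Fin N) →L[ℝ] ℝ) (c : ℝ)
    {F : Set (EuclideanSpace ℝ (Fin N))} (h : ∀ x ∈ F, l x = c) :
    ∀ x ∈ affineSpan ℝ F, l x = c := by
  intro x hx
  refine affineSpan_induction (p := fun x => l x = c) hx h fun k u v w hu hv hw => ?_
  simp [hu, hv, hw]

/-- If `y` and `x` are strictly on opposite sides of `S ⊆ {l = c}`, then `l y - c` and `l x - c`
are negatively proportional. -/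
lemma sOppSide_functional {N : ℕ} {l : EuclideanSpace ℝ (Fin N) →L[ℝ] ℝ} {c : ℝ}
    {S : AffineSubspace ℝ (EuclideanSpace ℝ (Fin N))} (h : ∀ x ∈ S, l x = c)
    {y x : EuclideanSpace ℝ (Fin N)} (hs : S.SOppSide y x) :
    ∃ k : ℝ, 0 < k ∧ l y - c = k * (c - l x) := by
  obtain ⟨⟨p, hp, q, hq, hr⟩, hy, hx⟩ := hs
  obtain ⟨r, s, hr0, hs0, he⟩ := hr.exists_pos
    (by rw [vsub_ne_zero]; rintro rfl; exact hy hp)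
    (by rw [vsub_ne_zero]; rintro rfl; exact hx hq)
  refine ⟨s / r, by positivity, ?_⟩
  have := congrArg l he
  simp only [vsub_eq_sub, map_smul, map_sub, h p hp, h q hq, smul_eq_mul] at this
  field_simp
  linarith

/-- If `y` and `x` are strictly on the same side of `S ⊆ {l = c}`, then `l y - c` and `l x - c`
are positively proportional. -/
lemma sSameSide_functional {N : ℕ} {l : EuclideanSpace ℝ (Fin N) →L[ℝ] ℝ} {c : ℝ}
    {S : AffineSubspace ℝ (EuclideanSpace ℝ (Fin N))} (h : ∀ x ∈ S, l x = c)
    {y x : EuclideanSpace ℝ (Fin N)} (hs : S.SSameSide y x) :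
    ∃ k : ℝ, 0 < k ∧ l y - c = k * (l x - c) := by
  obtain ⟨⟨p, hp, q, hq, hr⟩, hy, hx⟩ := hs
  obtain ⟨r, s, hr0, hs0, he⟩ := hr.exists_pos
    (by rw [vsub_ne_zero]; rintro rfl; exact hy hp)
    (by rw [vsub_ne_zero]; rintro rfl; exact hx hq)
  refine ⟨s / r, by positivity, ?_⟩
  have := congrArg l he
  simp only [vsub_eq_sub, map_smul, map_sub, h p hp, h q hq, smul_eq_mul] at this
  field_simp
  linarith

lemma le_on_convexHull {N : ℕ} (l : EuclideanSpace ℝ (Fin N) →L[ℝ] ℝ) (c : ℝ)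
    {V : Set (EuclideanSpace ℝ (Fin N))} (h : ∀ x ∈ V, l x ≤ c) :
    ∀ x ∈ convexHull ℝ V, l x ≤ c := fun _ hx =>
  convexHull_min (t := {x | l x ≤ c}) h (convex_halfSpace_le l.isLinear c) hx

lemma affineIndependent_insert_of_notMem {N : ℕ} {A : Set (EuclideanSpace ℝ (Fin N))}
    {y : EuclideanSpace ℝ (Fin N)}
    (hA : AffineIndependent ℝ ((↑) : A → EuclideanSpace ℝ (Fin N)))
    (hy : y ∉ affineSpan ℝ A) :
    AffineIndependent ℝ ((↑) : ↥(insert y A) → EuclideanSpace ℝ (Fin N)) := by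
  have key : ∀ w : ↥(insert y A),
      w ≠ ⟨y, mem_insert _ _⟩ → (w : EuclideanSpace ℝ (Fin N)) ∈ A := by
    rintro ⟨w, hw⟩ hne
    rcases hw with rfl | hw
    · exact absurd rfl hne
    · exact hw
  refine AffineIndependent.affineIndependent_of_notMem_span
    (i := (⟨y, mem_insert _ _⟩ : ↥(insert y A))) ?_ ?_
  · let e : {w : ↥(insert y A) // w ≠ ⟨y, mem_insert _ _⟩} ↪ A :=
      ⟨fun w => ⟨w.1.1, key w.1 w.2⟩, fun a b hab =>
        Subtype.ext (Subtype.ext (by simpa only [Subtype.mk.injEq] using hab))⟩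
    exact hA.comp_embedding e
  · intro h
    refine hy (affineSpan_mono ℝ ?_ h)
    rintro _ ⟨w, hw, rfl⟩
    exact key w hw

/-! ### Points strictly beneath every facet are interior -/

/-- An extreme point `a` of the polar, about `q`, of a finite set `V` is tight on a subset of `V`
that linearly spans the space when `q` is taken as origin: otherwise `a` could be moved both ways
along a direction orthogonal to all tight points. -/
lemma span_tight_eq_top {N : ℕ} {V : Set (EuclideanSpace ℝ (Fin N))} (hV : V.Finite)
    {q a : EuclideanSpace ℝ (Fin N)}
    (ha : a ∈ extremePoints ℝ {a | ∀ v ∈ V, ⟪a, v - q⟫ ≤ 1}) :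
    Submodule.span ℝ ((fun v => v - q) '' {v ∈ V | ⟪a, v - q⟫ = 1}) = ⊤ := by
  by_contra hne
  rw [← Submodule.orthogonal_eq_bot_iff] at hne
  obtain ⟨b, hb, hb0⟩ := Submodule.exists_mem_ne_zero_of_ne_bot hne
  have hbT : ∀ v ∈ V, ⟪a, v - q⟫ = 1 → ⟪b, v - q⟫ = 0 := fun v hv h1 =>
    (Submodule.mem_orthogonal' _ b).1 hb _ (Submodule.subset_span ⟨v, ⟨hv, h1⟩, rfl⟩)
  rw [mem_extremePoints] at ha
  obtain ⟨haD, hext⟩ := ha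
  have hev : ∀ᶠ e : ℝ in nhdsWithin 0 (Ioi 0), ∀ v ∈ V,
      ⟪a, v - q⟫ + e * ⟪b, v - q⟫ ≤ 1 ∧ ⟪a, v - q⟫ - e * ⟪b, v - q⟫ ≤ 1 := by
    rw [hV.eventually_all]
    intro v hv
    rcases (haD v hv).eq_or_lt with h | h
    · simp [h, hbT v hv h]
    · apply Filter.Eventually.filter_mono nhdsWithin_le_nhds
      have h1 : Filter.Tendsto (fun e : ℝ => ⟪a, v - q⟫ + e * ⟪b, v - q⟫) (nhds 0)
          (nhds (⟪a, v - q⟫ + 0 * ⟪b, v - q⟫)) := Continuous.tendsto (by fun_prop) 0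
      have h2 : Filter.Tendsto (fun e : ℝ => ⟪a, v - q⟫ - e * ⟪b, v - q⟫) (nhds 0)
          (nhds (⟪a, v - q⟫ - 0 * ⟪b, v - q⟫)) := Continuous.tendsto (by fun_prop) 0
      have h' : ⟪a, v - q⟫ + 0 * ⟪b, v - q⟫ < 1 := by simpa using h
      have h'' : ⟪a, v - q⟫ - 0 * ⟪b, v - q⟫ < 1 := by simpa using h
      filter_upwards [h1.eventually_lt_const h', h2.eventually_lt_const h''] with e he1 he2
      exact ⟨he1.le, he2.le⟩
  obtain ⟨e, he, he0⟩ := (hev.and self_mem_nhdsWithin).exists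
  have he0 : 0 < e := he0
  have h := (hext (a + e • b) (fun v hv => ?_) (a - e • b) (fun v hv => ?_)
    ⟨1/2, 1/2, by norm_num, by norm_num, by norm_num, by module⟩).1
  · have h3 : e • b = 0 := by simpa using h
    rcases smul_eq_zero.1 h3 with h4 | h4
    · exact he0.ne' h4
    · exact hb0 h4
  · rw [inner_add_left, real_inner_smul_left]; exact (he v hv).1
  · rw [inner_sub_left, real_inner_smul_left]; exact (he v hv).2

/-- A point outside the interior of a full-dimensional polytope is on or beyond the hyperplane
`{l = c}` of some facet. -/
lemma exists_facet_of_notMem_interior {n : ℕ} {V : Set (EuclideanSpace ℝ (Fin (n + 1)))}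
    (hV : V.Finite) (hint : (interior (convexHull ℝ V)).Nonempty)
    {w : EuclideanSpace ℝ (Fin (n + 1))} (hw : w ∉ interior (convexHull ℝ V)) :
    ∃ (l : EuclideanSpace ℝ (Fin (n + 1)) →L[ℝ] ℝ) (c : ℝ)
      (F : Set (EuclideanSpace ℝ (Fin (n + 1)))),
      F = {x ∈ convexHull ℝ V | l x = c} ∧ (∀ x ∈ convexHull ℝ V, l x ≤ c) ∧
      IsFacetOf (convexHull ℝ V) F ∧ (∀ x, x ∈ affineSpan ℝ F ↔ l x = c) ∧
      (∃ x ∈ convexHull ℝ V, l x < c) ∧ c ≤ l w := by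
  have hspan := hint
  rw [interior_convexHull_nonempty_iff_affineSpan_eq_top] at hspan
  obtain ⟨q, hq⟩ := hint
  obtain ⟨r, hr, hball⟩ := Metric.isOpen_iff.1 isOpen_interior q hq
  replace hball := hball.trans interior_subset
  set D : Set (EuclideanSpace ℝ (Fin (n + 1))) := {a | ∀ v ∈ V, ⟪a, v - q⟫ ≤ 1} with hD
  have hDhull : ∀ a ∈ D, ∀ x ∈ convexHull ℝ V, ⟪a, x - q⟫ ≤ 1 := by
    intro a ha x hx
    have := le_on_convexHull (innerSL ℝ a) (1 + ⟪a, q⟫) (V := V) (fun v hv => by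
      have := ha v hv
      rw [inner_sub_right] at this
      simp only [innerSL_apply_apply]; linarith) x hx
    rw [inner_sub_right]
    simp only [innerSL_apply_apply] at this
    linarith
  have hDc : IsCompact D := by
    apply Metric.isCompact_of_isClosed_isBounded
    · have : D = ⋂ v ∈ V, {a | ⟪a, v - q⟫ ≤ 1} := by ext; simp [hD]
      rw [this]
      exact isClosed_biInter fun v _ => isClosed_le (by fun_prop) continuous_const
    · refine (Metric.isBounded_closedBall (x := 0) (r := 2 / r)).subset fun a ha => ?_
      rw [mem_closedBall_zero_iff]
      rcases eq_or_ne a 0 with rfl | h0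
      · simp; positivity
      have hn : 0 < ‖a‖ := norm_pos_iff.2 h0
      have := hDhull a ha (q + (r / 2 / ‖a‖) • a) (hball (by
        rw [Metric.mem_ball, dist_eq_norm, add_sub_cancel_left, norm_smul, Real.norm_of_nonneg
          (by positivity), div_mul_cancel₀ _ hn.ne']
        linarith))
      rw [add_sub_cancel_left, real_inner_smul_right, real_inner_self_eq_norm_sq] at this
      rw [le_div_iff₀ hr]
      have h2 : r / 2 / ‖a‖ * ‖a‖ ^ 2 = r / 2 * ‖a‖ := by field_simp
      linarith
  -- A functional separating `w` from the interior, normalised, lies in the polar.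
  obtain ⟨a₀, ha₀D, ha₀⟩ : ∃ a₀ ∈ D, 1 ≤ ⟪a₀, w - q⟫ := by
    obtain ⟨f, hf⟩ := geometric_hahn_banach_open_point
      (convex_convexHull ℝ V).interior isOpen_interior hw
    have hpos : 0 < f w - f q := by linarith [hf q hq]
    have hfV : ∀ v ∈ V, f v ≤ f w := by
      intro v hv
      have h1 : v ∈ closure (interior (convexHull ℝ V)) := by
        rw [(convex_convexHull ℝ V).closure_interior_eq_closure_of_nonempty_interior ⟨q, hq⟩]
        exact subset_closure (subset_convexHull ℝ V hv)
      exact closure_minimal (t := {x | f x ≤ f w}) (fun x hx => (hf x hx).le)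
        (isClosed_le f.continuous continuous_const) h1
    have hrep : ∀ x, ⟪(InnerProductSpace.toDual ℝ _).symm f, x⟫ = f x := fun x => by simp
    refine ⟨(f w - f q)⁻¹ • (InnerProductSpace.toDual ℝ _).symm f, fun v hv => ?_, ?_⟩
    · rw [real_inner_smul_left, hrep, map_sub, inv_mul_le_iff₀ hpos]
      linarith [hfV v hv]
    · rw [real_inner_smul_left, hrep, map_sub, inv_mul_cancel₀ (ne_of_gt hpos)]
  -- The value at `w - q` is maximal over the polar at some extreme point `a`.
  obtain ⟨b, hbD, hb⟩ := hDc.exists_isMaxOn ⟨a₀, ha₀D⟩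
    (f := (innerSL ℝ (w - q))) (innerSL ℝ (w - q)).continuous.continuousOn
  have hMexp : IsExposed ℝ D ((innerSL ℝ (w - q)).toExposed D) :=
    ContinuousLinearMap.toExposed.isExposed
  obtain ⟨a, haM⟩ := (hMexp.isCompact hDc).extremePoints_nonempty ⟨b, hbD, hb⟩
  have haext : a ∈ extremePoints ℝ D := hMexp.isExtreme.extremePoints_subset_extremePoints haM
  have haw : 1 ≤ ⟪a, w - q⟫ := by
    have := (extremePoints_subset haM).2 a₀ ha₀D
    simp only [innerSL_apply_apply] at this
    rw [real_inner_comm]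
    rw [real_inner_comm] at ha₀
    linarith
  have haD : a ∈ D := extremePoints_subset haext
  have htop := span_tight_eq_top hV haext
  set c : ℝ := 1 + ⟪a, q⟫ with hc
  set F : Set (EuclideanSpace ℝ (Fin (n + 1))) := {x ∈ convexHull ℝ V | innerSL ℝ a x = c} with hF
  have hle : ∀ x ∈ convexHull ℝ V, innerSL ℝ a x ≤ c := fun x hx => by
    have := hDhull a haD x hx
    rw [inner_sub_right] at this
    simp only [innerSL_apply_apply]; linarith
  have hTF : ∀ v ∈ V, ⟪a, v - q⟫ = 1 → v ∈ F := fun v hv h1 => by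
    refine ⟨subset_convexHull ℝ V hv, ?_⟩
    rw [inner_sub_right] at h1
    simp only [innerSL_apply_apply]; linarith
  obtain ⟨v₀, hv₀, hv₀1⟩ : ∃ v ∈ V, ⟪a, v - q⟫ = 1 := by
    by_contra! hno
    have : {v ∈ V | ⟪a, v - q⟫ = 1} = ∅ := by
      ext v; simp only [mem_ofPred_eq, mem_empty_iff_false, iff_false, not_and]; exact hno v
    rw [this, image_empty, Submodule.span_empty] at htop
    exact bot_ne_top htop
  have hv₀F := hTF v₀ hv₀ hv₀1
  have ha0 : a ≠ 0 := by rintro rfl; simp at hv₀1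
  have hvs : ∀ x ∈ vectorSpan ℝ F, ⟪a, x⟫ = 0 := by
    intro x hx
    rw [vectorSpan_def] at hx
    induction hx using Submodule.span_induction with
    | mem x hx =>
      obtain ⟨p, hp, p', hp', rfl⟩ := hx
      have h1 := hp.2
      have h2 := hp'.2
      simp only [innerSL_apply_apply] at h1 h2
      simp only [vsub_eq_sub, inner_sub_right, h1, h2, sub_self]
    | zero => simp
    | add x y _ _ h1 h2 => rw [inner_add_right, h1, h2, add_zero]
    | smul k x _ h => rw [real_inner_smul_right, h, mul_zero]
  have hvs' : vectorSpan ℝ F = (ℝ ∙ a)ᗮ := by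
    ext x
    rw [Submodule.mem_orthogonal_singleton_iff_inner_right]
    refine ⟨hvs x, fun hx => ?_⟩
    have hx' : x ∈ vectorSpan ℝ F ⊔ (ℝ ∙ (v₀ - q)) := by
      refine (?_ : (⊤ : Submodule ℝ _) ≤ _) Submodule.mem_top
      rw [← htop, Submodule.span_le]
      rintro _ ⟨v, ⟨hv, hv1⟩, rfl⟩
      have : v - q = (v - v₀) + (v₀ - q) := by abel
      simp only [this]
      exact Submodule.add_mem_sup (vsub_mem_vectorSpan ℝ (hTF v hv hv1) hv₀F)
        (Submodule.mem_span_singleton_self _)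
    obtain ⟨s, hs, s', hs', rfl⟩ := Submodule.mem_sup.1 hx'
    obtain ⟨k, rfl⟩ := Submodule.mem_span_singleton.1 hs'
    rw [inner_add_right, hvs s hs, real_inner_smul_right, hv₀1] at hx
    have : k = 0 := by linarith
    simpa [this] using hs
  refine ⟨innerSL ℝ a, c, F, rfl, hle, ⟨fun _ => ⟨innerSL ℝ a, ?_⟩, ⟨v₀, hv₀F⟩, ?_⟩, ?_,
    ⟨q, interior_subset hq, ?_⟩, ?_⟩
  · ext x
    constructor
    · rintro ⟨hx, hxc⟩
      exact ⟨hx, fun y hy => by rw [hxc]; exact hle y hy⟩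
    · rintro ⟨hx, hxm⟩
      refine ⟨hx, le_antisymm (hle x hx) ?_⟩
      rw [← hv₀F.2]; exact hxm v₀ hv₀F.1
  · have hKtop : vectorSpan ℝ (convexHull ℝ V) = ⊤ := by
      rw [← direction_affineSpan, affineSpan_convexHull, hspan, AffineSubspace.direction_top]
    have : Fact (Module.finrank ℝ (EuclideanSpace ℝ (Fin (n + 1))) = n + 1) := ⟨by simp⟩
    rw [adim, adim, hvs', hKtop, Submodule.finrank_orthogonal_span_singleton (n := n) ha0]
    simp
  · intro x
    refine ⟨eq_on_affineSpan _ _ (fun x hx => hx.2) x, fun hx => ?_⟩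
    have h1 : x - v₀ ∈ (affineSpan ℝ F).direction := by
      rw [direction_affineSpan, hvs', Submodule.mem_orthogonal_singleton_iff_inner_right,
        inner_sub_right]
      have := hv₀F.2
      simp only [innerSL_apply_apply] at this hx
      linarith
    have := AffineSubspace.vadd_mem_of_mem_direction h1 (mem_affineSpan ℝ hv₀F)
    simpa using this
  · simp [hc]
  · rw [inner_sub_right] at haw
    simp only [innerSL_apply_apply]; linarith

/-! ### Supporting hyperplanes of the polytope through the added points -/

/-- If `y` is beneath every facet of `conv V` except possibly `conv V ∩ {f = t}`, then a
supporting hyperplane `{l = c}` of `conv V` through `y` meets `conv V` only within `{f = t}`. -/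
lemma contact_subset {n : ℕ} {V : Set (EuclideanSpace ℝ (Fin (n + 1)))}
    (hV : V.Finite) (hint : (interior (convexHull ℝ V)).Nonempty)
    (f : EuclideanSpace ℝ (Fin (n + 1)) →L[ℝ] ℝ) (t : ℝ)
    (hft : ∀ x ∈ convexHull ℝ V, t ≤ f x)
    {y : EuclideanSpace ℝ (Fin (n + 1))}
    (hy : ∀ F, IsFacetOf (convexHull ℝ V) F → F ≠ convexHull ℝ V ∩ {x | f x = t} →
      IsBeneath (convexHull ℝ V) F y)
    {l : EuclideanSpace ℝ (Fin (n + 1)) →L[ℝ] ℝ} {c : ℝ} (hl : l ≠ 0)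
    (hlc : ∀ x ∈ convexHull ℝ V, l x ≤ c) (hly : l y = c)
    {x : EuclideanSpace ℝ (Fin (n + 1))} (hx : x ∈ convexHull ℝ V) (hlx : l x = c) :
    f x = t := by
  by_contra hne
  have hfx : t < f x := lt_of_le_of_ne (hft x hx) (Ne.symm hne)
  obtain ⟨s, hs0, hs1, hfs⟩ : ∃ s : ℝ, 0 < s ∧ s < 1 ∧ t < f (x + s • (y - x)) := by
    have h1 : Filter.Tendsto (fun s : ℝ => f (x + s • (y - x))) (nhds 0)
        (nhds (f (x + (0 : ℝ) • (y - x)))) := Continuous.tendsto (by fun_prop) 0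
    have h2 : t < f (x + (0 : ℝ) • (y - x)) := by simpa using hfx
    have h3 := (h1.eventually_const_lt h2).filter_mono (nhdsWithin_le_nhds (s := Ioi 0))
    have h4 : ∀ᶠ s : ℝ in nhdsWithin 0 (Ioi 0), s < 1 :=
      (eventually_lt_nhds one_pos).filter_mono nhdsWithin_le_nhds
    obtain ⟨s, ⟨h5, h6⟩, h7⟩ := ((h3.and h4).and self_mem_nhdsWithin).exists
    exact ⟨s, h7, h6, h5⟩
  set w := x + s • (y - x) with hwdef
  have hlw : l w = c := by simp [hwdef, hly, hlx]
  -- A nonzero functional does not attain its maximum over a set in the interior.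
  have hw : w ∉ interior (convexHull ℝ V) := by
    intro hw
    obtain ⟨e, he⟩ : ∃ e, 0 < l e := by
      by_contra! h
      apply hl
      ext e
      have h1 := h e
      have h2 := h (-e)
      rw [map_neg] at h2
      simp only [zero_apply]
      linarith
    have h1 : Filter.Tendsto (fun s : ℝ => w + s • e) (nhds 0)
        (nhds (w + (0 : ℝ) • e)) := Continuous.tendsto (by fun_prop) 0
    rw [zero_smul, add_zero] at h1
    have h2 := (h1.eventually (mem_interior_iff_mem_nhds.1 hw)).filter_mono
      (nhdsWithin_le_nhds (s := Ioi 0))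
    obtain ⟨δ, h3, h4⟩ := (h2.and self_mem_nhdsWithin).exists
    have h4 : 0 < δ := h4
    have := hlc _ h3
    rw [map_add, map_smul, hlw, smul_eq_mul] at this
    nlinarith [mul_pos h4 he]
  obtain ⟨g, c', F, hF, hgc, hfac, haff, ⟨x₀, hx₀, hx₀c⟩, hgw⟩ :=
    exists_facet_of_notMem_interior hV hint hw
  have hgw' : g w = g x + s * (g y - g x) := by simp [hwdef]
  by_cases hFK : F = convexHull ℝ V ∩ {x | f x = t}
  · -- The segment from `x` to `w` would cross the facet hyperplane, which lies in `{f = t}`.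
    have hgx : g x < c' := by
      refine lt_of_le_of_ne (hgc x hx) fun h => hne ?_
      have : x ∈ F := by rw [hF]; exact ⟨hx, h⟩
      rw [hFK] at this
      exact this.2
    have hpos : 0 < g w - g x := by linarith
    set τ := (c' - g x) / (g w - g x) with hτ
    have hτ0 : 0 < τ := div_pos (by linarith) hpos
    have hτ1 : τ ≤ 1 := by rw [hτ, div_le_one hpos]; linarith
    have hτm : τ * (g w - g x) = c' - g x := by rw [hτ]; field_simp
    have hp : g (x + τ • (w - x)) = c' := by
      rw [map_add, map_smul, map_sub, smul_eq_mul, hτm]; ring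
    have hfp := eq_on_affineSpan f t (F := F) (by rw [hFK]; exact fun x hx => hx.2) _
      ((haff _).2 hp)
    rw [map_add, map_smul, map_sub, smul_eq_mul] at hfp
    nlinarith
  · have hb := hy F hfac hFK x₀ hx₀ (fun h => hx₀c.ne ((haff _).1 h))
    obtain ⟨k, hk, hk'⟩ := sSameSide_functional (l := g) (fun x hx => (haff x).1 hx) hb
    have hgy : g y < c' := by nlinarith
    have := hgc x hx
    nlinarith

/-- A face `K ∩ {l = c}` of `K` whose supporting halfspace contains a point beyond `K₁` is not
`K₁`. -/
lemma face_ne_of_beyond {N : ℕ} {K K₁ : Set (EuclideanSpace ℝ (Fin N))}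
    {y x : EuclideanSpace ℝ (Fin N)} (hy : IsBeyond K K₁ y) (hx : x ∈ K)
    (hx₁ : x ∉ affineSpan ℝ K₁) {l : EuclideanSpace ℝ (Fin N) →L[ℝ] ℝ} {c : ℝ}
    (hlc : ∀ x ∈ K, l x ≤ c) (hly : l y ≤ c) : {x ∈ K | l x = c} ≠ K₁ := by
  intro h
  have hc : ∀ x ∈ affineSpan ℝ K₁, l x = c :=
    eq_on_affineSpan l c (by rw [← h]; exact fun x hx => hx.2)
  obtain ⟨k, hk, hk'⟩ := sOppSide_functional hc (hy x hx hx₁)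
  have hlx : l x < c := lt_of_le_of_ne (hlc x hx) fun h' =>
    hx₁ (mem_affineSpan ℝ (by rw [← h]; exact ⟨hx, h'⟩))
  nlinarith [mul_pos hk (sub_pos.2 hlx)]

lemma isExposed_sep {N : ℕ} {K : Set (EuclideanSpace ℝ (Fin N))}
    (l : EuclideanSpace ℝ (Fin N) →L[ℝ] ℝ) {c : ℝ} (hlc : ∀ x ∈ K, l x ≤ c) :
    IsExposed ℝ K {x ∈ K | l x = c} := by
  rintro ⟨p, hp, hpc⟩
  refine ⟨l, ?_⟩
  ext x
  constructor
  · rintro ⟨hx, hxc⟩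
    exact ⟨hx, fun y hy => by rw [hxc]; exact hlc y hy⟩
  · rintro ⟨hx, hxm⟩
    exact ⟨hx, le_antisymm (hlc x hx) (by rw [← hpc]; exact hxm p hp)⟩

/-- A nonempty face of `K` inside `H` is an exposed face of the slice `K ∩ H`, hence a simplex if
it is not the whole slice and the proper faces of the slice are simplices. -/
lemma isSimplexSet_of_subset_slice {N : ℕ} {K : Set (EuclideanSpace ℝ (Fin N))} {H : Set _}
    (hs : ∀ F, IsExposed ℝ (K ∩ H) F → F.Nonempty → F ≠ K ∩ H → IsSimplexSet F)
    (l : EuclideanSpace ℝ (Fin N) →L[ℝ] ℝ) {c : ℝ} (hlc : ∀ x ∈ K, l x ≤ c)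
    (hne : {x ∈ K | l x = c}.Nonempty) (hsub : {x ∈ K | l x = c} ⊆ H)
    (hneq : {x ∈ K | l x = c} ≠ K ∩ H) : IsSimplexSet {x ∈ K | l x = c} := by
  refine hs _ ?_ hne hneq
  have h := isExposed_sep (K := K ∩ H) l (c := c) (fun x hx => hlc x hx.1)
  convert h using 1
  ext x
  exact ⟨fun hx => ⟨⟨hx.1, hsub hx⟩, hx.2⟩, fun hx => ⟨hx.1.1, hx.2⟩⟩

/-! ### The faces of `Q` -/

theorem stmt9 (d m : ℕ) (hd : 2 ≤ d) (hm : 2 ≤ m)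
    (u : EuclideanSpace ℝ (Fin (d + 1))) (hu : ‖u‖ = 1)
    (t : Fin m → ℝ) (ht : StrictMono t)
    (P : Fin m → Set (EuclideanSpace ℝ (Fin (d + 1))))
    (hfin : ∀ i, (P i).Finite)
    (hsub : ∀ i, P i ⊆ {x | ⟪x, u⟫ = t i})
    (hdim : ∀ i, adim (convexHull ℝ (P i)) = d)
    (KP KP1 KPm Q : Set (EuclideanSpace ℝ (Fin (d + 1))))
    (hKP : KP = convexHull ℝ (⋃ i, P i))
    (hKP1 : KP1 = KP ∩ {x | ⟪x, u⟫ = t ⟨0, by omega⟩})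
    (hKPm : KPm = KP ∩ {x | ⟪x, u⟫ = t ⟨m - 1, by omega⟩})
    -- every nonempty proper exposed face of `KP` contained neither in Π₁ nor in Π_m
    -- is a simplex
    (hsimp : ∀ F : Set (EuclideanSpace ℝ (Fin (d + 1))),
      IsExposed ℝ KP F → F.Nonempty → F ≠ KP →
      ¬ F ⊆ {x | ⟪x, u⟫ = t ⟨0, by omega⟩} →
      ¬ F ⊆ {x | ⟪x, u⟫ = t ⟨m - 1, by omega⟩} →
      IsSimplexSet F)
    -- `KP1` and `KPm` are simplicial polytopes
    (hsimp1 : ∀ F : Set (EuclideanSpace ℝ (Fin (d + 1))),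
      IsExposed ℝ KP1 F → F.Nonempty → F ≠ KP1 → IsSimplexSet F)
    (hsimpm : ∀ F : Set (EuclideanSpace ℝ (Fin (d + 1))),
      IsExposed ℝ KPm F → F.Nonempty → F ≠ KPm → IsSimplexSet F)
    (y z : EuclideanSpace ℝ (Fin (d + 1)))
    (hy₁ : IsBeyond KP KP1 y)
    (hy₂ : ∀ F, IsFacetOf KP F → F ≠ KP1 → IsBeneath KP F y)
    (hz₁ : IsBeyond KP KPm z)
    (hz₂ : ∀ F, IsFacetOf KP F → F ≠ KPm → IsBeneath KP F z)
    (hQ : Q = convexHull ℝ ((⋃ i, P i) ∪ {y, z})) :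
    adim Q = d + 1 ∧
    ∀ F : Set (EuclideanSpace ℝ (Fin (d + 1))),
      IsExposed ℝ Q F → F.Nonempty → F ≠ Q → IsSimplexSet F := by
  set V := ⋃ i, P i with hV
  have hVfin : V.Finite := finite_iUnion hfin
  set f : EuclideanSpace ℝ (Fin (d + 1)) →L[ℝ] ℝ := innerSL ℝ u with hf
  have hfi : ∀ x, f x = ⟪x, u⟫ := fun x => by rw [real_inner_comm]; rfl
  set i₀ : Fin m := ⟨0, by omega⟩ with hi₀
  set i₁ : Fin m := ⟨m - 1, by omega⟩ with hi₁
  have htt : t i₀ < t i₁ := ht (by rw [Fin.lt_def]; simp [hi₀, hi₁]; omega)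
  have hPne : ∀ i, (P i).Nonempty := by
    intro i
    by_contra h
    have h1 := hdim i
    rw [not_nonempty_iff_eq_empty.1 h, convexHull_empty, adim, vectorSpan_empty,
      finrank_bot] at h1
    omega
  have hPK : ∀ i, P i ⊆ KP := fun i => by
    rw [hKP]; exact (subset_iUnion P i).trans (subset_convexHull ℝ _)
  have hlow : ∀ x ∈ KP, t i₀ ≤ f x := by
    intro x hx
    have := le_on_convexHull (-f) (-t i₀) (V := V) (fun v hv => by
      obtain ⟨i, hi⟩ := mem_iUnion.1 hv
      have h1 : ⟪v, u⟫ = t i := hsub i hi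
      have : t i₀ ≤ t i := ht.monotone (by rw [Fin.le_def]; simp [hi₀])
      simp only [neg_apply, hfi, h1]; linarith) x (hKP ▸ hx)
    simp only [neg_apply] at this
    linarith
  have hupp : ∀ x ∈ KP, f x ≤ t i₁ := by
    intro x hx
    exact le_on_convexHull f (t i₁) (V := V) (fun v hv => by
      obtain ⟨i, hi⟩ := mem_iUnion.1 hv
      have h1 : ⟪v, u⟫ = t i := hsub i hi
      rw [hfi, h1]
      exact ht.monotone (by rw [Fin.le_def]; simp [hi₁]; omega)) x (hKP ▸ hx)
  obtain ⟨p₀, hp₀⟩ := hPne i₀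
  obtain ⟨p₁, hp₁⟩ := hPne i₁
  have hfp₀ : f p₀ = t i₀ := by rw [hfi]; exact hsub i₀ hp₀
  have hfp₁ : f p₁ = t i₁ := by rw [hfi]; exact hsub i₁ hp₁
  have hf1 : ∀ x ∈ affineSpan ℝ KP1, f x = t i₀ :=
    eq_on_affineSpan f _ (by rw [hKP1]; intro x hx; rw [hfi]; exact hx.2)
  have hfm : ∀ x ∈ affineSpan ℝ KPm, f x = t i₁ :=
    eq_on_affineSpan f _ (by rw [hKPm]; intro x hx; rw [hfi]; exact hx.2)
  have hp₁n : p₁ ∉ affineSpan ℝ KP1 := fun h => by have := hf1 _ h; linarith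
  have hp₀n : p₀ ∉ affineSpan ℝ KPm := fun h => by have := hfm _ h; linarith
  have hfy : f y < t i₀ := by
    obtain ⟨k, hk, h⟩ := sOppSide_functional hf1 (hy₁ p₁ (hPK _ hp₁) hp₁n)
    nlinarith
  have hfz : t i₁ < f z := by
    obtain ⟨k, hk, h⟩ := sOppSide_functional hfm (hz₁ p₀ (hPK _ hp₀) hp₀n)
    nlinarith
  -- The bottom layer spans a hyperplane, and the top layer leaves it.
  have hvtop : vectorSpan ℝ KP = ⊤ := by
    apply Submodule.eq_top_of_finrank_eq
    have hle : vectorSpan ℝ (convexHull ℝ (P i₀)) ≤ vectorSpan ℝ KP :=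
      vectorSpan_mono ℝ (convexHull_min (hPK _) (by rw [hKP]; exact convex_convexHull ℝ _))
    have hlt : vectorSpan ℝ (convexHull ℝ (P i₀)) < vectorSpan ℝ KP := by
      refine lt_of_le_of_ne hle fun h => ?_
      have h1 : p₁ - p₀ ∈ vectorSpan ℝ (convexHull ℝ (P i₀)) := by
        rw [h]; exact vsub_mem_vectorSpan ℝ (hPK _ hp₁) (hPK _ hp₀)
      rw [← direction_affineSpan, affineSpan_convexHull] at h1
      have h2 := AffineSubspace.vadd_mem_of_mem_direction h1 (mem_affineSpan ℝ hp₀)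
      have h3 := eq_on_affineSpan f (t i₀)
        (fun x hx => by rw [hfi]; exact hsub i₀ hx) _ h2
      simp only [vadd_eq_add, sub_add_cancel] at h3
      linarith
    have h1 := Submodule.finrank_lt_finrank_of_lt hlt
    have h2 := hdim i₀
    rw [adim] at h2
    have h3 := Submodule.finrank_le (vectorSpan ℝ KP)
    simp only [finrank_euclideanSpace, Fintype.card_fin] at h3 ⊢
    omega
  have hint : (interior (convexHull ℝ V)).Nonempty := by
    rw [interior_convexHull_nonempty_iff_affineSpan_eq_top, ← affineSpan_convexHull, ← hKP,
      AffineSubspace.affineSpan_eq_top_iff_vectorSpan_eq_top_of_nonempty ℝ _ _ ⟨p₀, hPK _ hp₀⟩]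
    exact hvtop
  have hKQ : KP ⊆ Q := by rw [hKP, hQ]; exact convexHull_mono subset_union_left
  have hyQ : y ∈ Q := by rw [hQ]; exact subset_convexHull ℝ _ (by simp)
  have hzQ : z ∈ Q := by rw [hQ]; exact subset_convexHull ℝ _ (by simp)
  refine ⟨?_, ?_⟩
  · have : vectorSpan ℝ Q = ⊤ := top_le_iff.1 (hvtop ▸ vectorSpan_mono ℝ hKQ)
    rw [adim, this]; simp
  intro F hFe hFne hFQ
  obtain ⟨l, hl⟩ := hFe hFne
  obtain ⟨x₀, hx₀⟩ := hFne
  set c := l x₀ with hc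
  have hx₀' := hx₀
  rw [hl] at hx₀'
  have hlQ : ∀ x ∈ Q, l x ≤ c := hx₀'.2
  have hlK : ∀ x ∈ KP, l x ≤ c := fun x hx => hlQ x (hKQ hx)
  have hF : F = {x ∈ Q | l x = c} := by
    rw [hl]; ext x
    exact ⟨fun h => ⟨h.1, le_antisymm (hlQ x h.1) (h.2 _ hx₀'.1)⟩,
      fun h => ⟨h.1, fun w hw => by rw [h.2]; exact hlQ w hw⟩⟩
  have hl0 : l ≠ 0 := by
    rintro rfl
    apply hFQ
    rw [hl]; ext x; simp
  set G := {x ∈ KP | l x = c} with hG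
  have hGF : G ⊆ F := by rw [hF]; exact fun x hx => ⟨hKQ hx.1, hx.2⟩
  have hGne1 : G ≠ KP1 := face_ne_of_beyond hy₁ (hPK _ hp₁) hp₁n hlK (hlQ y hyQ)
  have hGnem : G ≠ KPm := face_ne_of_beyond hz₁ (hPK _ hp₀) hp₀n hlK (hlQ z hzQ)
  have hGneK : G ≠ KP := by
    intro h
    apply hl0
    have h1 : affineSpan ℝ KP = ⊤ := by
      rw [AffineSubspace.affineSpan_eq_top_iff_vectorSpan_eq_top_of_nonempty ℝ _ _
        ⟨p₀, hPK _ hp₀⟩]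
      exact hvtop
    have h2 : ∀ x, l x = c := fun x =>
      eq_on_affineSpan l c (F := KP) (fun x hx => by rw [← h] at hx; exact hx.2) x
        (by rw [h1]; exact AffineSubspace.mem_top ℝ _ x)
    have h3 := h2 0
    rw [map_zero] at h3
    ext x
    rw [h2 x, ← h3]; rfl
  have hGsimp : IsSimplexSet G := by
    rcases G.eq_empty_or_nonempty with h | hne
    · rw [h, IsSimplexSet, extremePoints_empty]
      exact affineIndependent_of_subsingleton ℝ _
    by_cases h1 : G ⊆ {x | ⟪x, u⟫ = t i₀}
    · rw [hKP1] at hsimp1 hGne1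
      exact isSimplexSet_of_subset_slice hsimp1 l hlK hne h1 hGne1
    by_cases h2 : G ⊆ {x | ⟪x, u⟫ = t i₁}
    · rw [hKPm] at hsimpm hGnem
      exact isSimplexSet_of_subset_slice hsimpm l hlK hne h2 hGnem
    exact hsimp G (isExposed_sep l hlK) hne hGneK h1 h2
  have hGy : l y = c → ∀ x ∈ G, f x = t i₀ := by
    intro hly x hx
    have hfac : ∀ F, IsFacetOf (convexHull ℝ V) F → F ≠ convexHull ℝ V ∩ {x | f x = t i₀} →
        IsBeneath (convexHull ℝ V) F y := by
      rw [← hKP]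
      intro F hF hne
      refine hy₂ F hF fun h => hne ?_
      rw [h, hKP1]; simp only [hfi]
    exact contact_subset hVfin hint f (t i₀) (hKP ▸ hlow) hfac hl0 (hKP ▸ hlK) hly
      (hKP ▸ hx.1) hx.2
  have hGz : l z = c → ∀ x ∈ G, f x = t i₁ := by
    intro hlz x hx
    have hfac : ∀ F, IsFacetOf (convexHull ℝ V) F →
        F ≠ convexHull ℝ V ∩ {x | (-f) x = -t i₁} → IsBeneath (convexHull ℝ V) F z := by
      rw [← hKP]
      intro F hF hne
      refine hz₂ F hF fun h => hne ?_
      rw [h, hKPm]; simp only [neg_apply, neg_inj, hfi]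
    have := contact_subset hVfin hint (-f) (-t i₁)
      (by rw [← hKP]; intro x hx; simpa using hupp x hx) hfac hl0 (hKP ▸ hlK) hlz
      (hKP ▸ hx.1) hx.2
    simpa using this
  have hext : ∀ x ∈ F.extremePoints ℝ, (x = y ∧ l y = c) ∨ (x = z ∧ l z = c) ∨
      x ∈ G.extremePoints ℝ := by
    intro x hx
    have hxF : x ∈ F := extremePoints_subset hx
    have hxc : l x = c := by rw [hF] at hxF; exact hxF.2
    have h1 := hFe.isExtreme.extremePoints_subset_extremePoints hx
    rw [hQ] at h1
    rcases extremePoints_convexHull_subset h1 with h2 | rfl | h2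
    · right; right
      exact inter_extremePoints_subset_extremePoints_of_subset hGF
        ⟨⟨hKP ▸ subset_convexHull ℝ _ h2, hxc⟩, hx⟩
    · exact Or.inl ⟨rfl, hxc⟩
    · rw [mem_singleton_iff] at h2
      subst h2
      exact Or.inr (Or.inl ⟨rfl, hxc⟩)
  have hextG : ∀ s, (∀ x ∈ G, f x = s) → ∀ x ∈ affineSpan ℝ (G.extremePoints ℝ), f x = s :=
    fun s hs => eq_on_affineSpan f s fun x hx => hs x (extremePoints_subset hx)
  unfold IsSimplexSet at hGsimp ⊢
  by_cases hly : l y = c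
  · have hyG : AffineIndependent ℝ ((↑) : ↥(insert y (G.extremePoints ℝ)) →
        EuclideanSpace ℝ (Fin (d + 1))) :=
      affineIndependent_insert_of_notMem hGsimp fun h => by
        have := hextG _ (hGy hly) _ h; linarith
    by_cases hlz : l z = c
    · have hGe : ∀ x, x ∉ G := fun x hx => by
        have h1 := hGy hly x hx
        have h2 := hGz hlz x hx
        linarith
      have hyz : AffineIndependent ℝ ((↑) : ↥(insert z ({y} : Set _)) →
          EuclideanSpace ℝ (Fin (d + 1))) := by
        refine affineIndependent_insert_of_notMem (affineIndependent_of_subsingleton ℝ _) ?_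
        rw [AffineSubspace.mem_affineSpan_singleton]
        rintro rfl
        linarith
      refine hyz.mono fun x hx => ?_
      rcases hext x hx with h | h | h
      · simp [h.1]
      · simp [h.1]
      · exact absurd (extremePoints_subset h) (hGe x)
    · refine hyG.mono fun x hx => ?_
      rcases hext x hx with h | h | h
      · simp [h.1]
      · exact absurd h.2 hlz
      · exact Or.inr h
  · by_cases hlz : l z = c
    · have hzG : AffineIndependent ℝ ((↑) : ↥(insert z (G.extremePoints ℝ)) →
          EuclideanSpace ℝ (Fin (d + 1))) :=
        affineIndependent_insert_of_notMem hGsimp fun h => by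
          have := hextG _ (hGz hlz) _ h; linarith
      refine hzG.mono fun x hx => ?_
      rcases hext x hx with h | h | h
      · exact absurd h.2 hly
      · simp [h.1]
      · exact Or.inr h
    · refine hGsimp.mono fun x hx => ?_
      rcases hext x hx with h | h | h
      · exact absurd h.2 hly
      · exact absurd h.2 hlz
      · exact h
end

section
/- Let c_1, …, c_n be points in E^d and r_1, …, r_n ≥ 0. For each k let σ_k be the closed ball in E^d with center c_k and radius r_k, let p_k = (c_k, r_k) ∈ E^d × ℝ, let λ_0 = {(x, t) ∈ E^d × ℝ : t ≤ 0 and ‖x‖ ≤ −t} (the lower half-cone with apex at the origin, vertical axis, and half-angle π/4), and let λ(p_k) = p_k + λ_0. Then: (1) conv(λ(p_1) ∪ … ∪ λ(p_n)) = conv({p_1, …, p_n}) + λ_0 (Minkowski sum); and (2) (conv({p_1, …, p_n}) + λ_0) ∩ (E^d × {0}) = conv(σ_1 ∪ … ∪ σ_n) × {0}, i.e., the convex hull of the balls is the slice of this Minkowski sum by the hyperplane {x_{d+1} = 0}. -/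
/-!
Part (1) holds because taking convex hulls commutes with Minkowski sums and the half-cone is
convex. For part (2), a point of the slice is `(y + v, 0)` with `(y, s)` in the hull of the apices
and `‖v‖ ≤ s`. Writing `v = s • u` with `‖u‖ ≤ 1`, the linear map `(y, s) ↦ y + s • u` sends each
apex `(c k, r k)` into the ball of center `c k` and radius `r k`, hence sends the hull of the apices
into the hull of the balls. Conversely the slice is convex and contains every ball, since
`(x, 0) = (c k, r k) + (x - c k, -r k)`.
-/

open Set Pointwise

/-- The half-cone is the epigraph of the norm turned upside down, so it is convex by the triangle
inequality. -/
lemma convex_lowerCone (d : ℕ) :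
    Convex ℝ {q : EuclideanSpace ℝ (Fin d) × ℝ | q.2 ≤ 0 ∧ ‖q.1‖ ≤ -q.2} := by
  rintro ⟨x, s⟩ ⟨hs, hx⟩ ⟨y, t⟩ ⟨ht, hy⟩ a b ha hb -
  simp only at hs hx ht hy
  have h : ‖a • x + b • y‖ ≤ a * ‖x‖ + b * ‖y‖ := by
    refine (norm_add_le _ _).trans_eq ?_
    rw [norm_smul, norm_smul, Real.norm_of_nonneg ha, Real.norm_of_nonneg hb]
  constructor
  · simp only [Prod.smul_mk, Prod.mk_add_mk, smul_eq_mul]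
    nlinarith
  · simp only [Prod.smul_mk, Prod.mk_add_mk, smul_eq_mul]
    nlinarith [mul_le_mul_of_nonneg_left hx ha, mul_le_mul_of_nonneg_left hy hb]

/-- A linear map `(y, s) ↦ y + s • u` with `‖u‖ ≤ 1` sends the hull of the apices into the hull
of the balls. -/
lemma add_smul_mem_hull {d n : ℕ} {c : Fin n → EuclideanSpace ℝ (Fin d)} {r : Fin n → ℝ}
    (hr : ∀ k, 0 ≤ r k) {u : EuclideanSpace ℝ (Fin d)} (hu : ‖u‖ ≤ 1)
    {q : EuclideanSpace ℝ (Fin d) × ℝ}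
    (hq : q ∈ convexHull ℝ (Set.range fun k => ((c k, r k) : EuclideanSpace ℝ (Fin d) × ℝ))) :
    q.1 + q.2 • u ∈ convexHull ℝ (⋃ k, Metric.closedBall (c k) (r k)) := by
  let f : EuclideanSpace ℝ (Fin d) × ℝ →ₗ[ℝ] EuclideanSpace ℝ (Fin d) :=
    LinearMap.fst ℝ _ _ + (LinearMap.snd ℝ _ _).smulRight u
  have hsub : (Set.range fun k => ((c k, r k) : EuclideanSpace ℝ (Fin d) × ℝ)) ⊆
      f ⁻¹' convexHull ℝ (⋃ k, Metric.closedBall (c k) (r k)) := by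
    rintro _ ⟨k, rfl⟩
    refine subset_convexHull ℝ _ (mem_iUnion.2 ⟨k, ?_⟩)
    simp only [f, LinearMap.add_apply, LinearMap.fst_apply, LinearMap.smulRight_apply,
      LinearMap.snd_apply, mem_closedBall_iff_norm, add_sub_cancel_left, norm_smul,
      Real.norm_of_nonneg (hr k)]
    exact mul_le_of_le_one_right (hr k) hu
  exact convexHull_min hsub ((convex_convexHull ℝ _).linear_preimage f) hq


theorem stmt10 (d n : ℕ) (c : Fin n → EuclideanSpace ℝ (Fin d)) (r : Fin n → ℝ)
    (hr : ∀ k, 0 ≤ r k) :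
    -- (1) the convex hull of the half-cones is the Minkowski sum of the convex hull of the
    -- apices with the half-cone at the origin
    convexHull ℝ (⋃ k, ({((c k, r k) : EuclideanSpace ℝ (Fin d) × ℝ)} +
        {q : EuclideanSpace ℝ (Fin d) × ℝ | q.2 ≤ 0 ∧ ‖q.1‖ ≤ -q.2})) =
      convexHull ℝ (Set.range fun k => ((c k, r k) : EuclideanSpace ℝ (Fin d) × ℝ)) +
        {q : EuclideanSpace ℝ (Fin d) × ℝ | q.2 ≤ 0 ∧ ‖q.1‖ ≤ -q.2} ∧
    -- (2) the slice of this Minkowski sum by the hyperplane {x_{d+1} = 0} is the convex hull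
    -- of the balls
    (convexHull ℝ (Set.range fun k => ((c k, r k) : EuclideanSpace ℝ (Fin d) × ℝ)) +
        {q : EuclideanSpace ℝ (Fin d) × ℝ | q.2 ≤ 0 ∧ ‖q.1‖ ≤ -q.2}) ∩
      {q : EuclideanSpace ℝ (Fin d) × ℝ | q.2 = 0} =
      (convexHull ℝ (⋃ k, Metric.closedBall (c k) (r k))) ×ˢ ({0} : Set ℝ) := by
  constructor
  · rw [← iUnion_add, iUnion_singleton_eq_range, convexHull_add, (convex_lowerCone d).convexHull_eq]
  · apply Subset.antisymm
    · rintro _ ⟨⟨⟨y, s⟩, hq, ⟨v, t⟩, ⟨ht, hv⟩, rfl⟩, h0⟩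
      simp only [mem_ofPred_eq, Prod.mk_add_mk] at ht hv h0
      obtain rfl : t = -s := by linarith
      rw [neg_neg] at hv
      have hs : 0 ≤ s := by linarith
      -- If `s = 0` then `v = 0`, and the convention `0⁻¹ = 0` keeps both facts about `u` true.
      have hu : ‖s⁻¹ • v‖ ≤ 1 := by
        rw [norm_smul, norm_inv, Real.norm_of_nonneg hs]
        exact inv_mul_le_one_of_le₀ hv hs
      have hsv : s • s⁻¹ • v = v := by
        rcases hs.eq_or_lt with rfl | hs
        · simp [norm_le_zero_iff.1 hv]
        · exact smul_inv_smul₀ hs.ne' v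
      have := add_smul_mem_hull hr hu hq
      simp only [hsv] at this
      exact ⟨this, h0⟩
    · rintro ⟨x, t⟩ ⟨hx, ht⟩
      obtain rfl : t = 0 := ht
      refine ⟨?_, rfl⟩
      refine convexHull_min (s := ⋃ k, Metric.closedBall (c k) (r k))
        (t := LinearMap.inl ℝ (EuclideanSpace ℝ (Fin d)) ℝ ⁻¹' _) ?_
        (((convex_convexHull ℝ _).add (convex_lowerCone d)).linear_preimage _) hx
      intro z hz
      obtain ⟨k, hk⟩ := mem_iUnion.1 hz
      refine ⟨(c k, r k), subset_convexHull ℝ _ ⟨k, rfl⟩, (z - c k, -r k), ⟨?_, ?_⟩, ?_⟩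
      · simpa using hr k
      · simpa using mem_closedBall_iff_norm.1 hk
      · simp
end

section
/- Fix an odd integer d ≥ 3. There exists a constant c > 0, depending only on d, such that for any two d-dimensional polytopes 𝒫 = conv(V) and 𝒬 = conv(W) in E^d, where 𝒫 has n vertices and 𝒬 has m vertices, the total number of nonempty exposed faces of the Minkowski sum 𝒫 + 𝒬 is at most c · (n·m^{⌊d/2⌋} + m·n^{⌊d/2⌋}). (Upper bound half of the Minkowski-sum consequence of Theorem 2.6 stated in Section 7.) -/
/-!
Write `d = 2k + 1`. A face of `P + Q` exposed by `u` is determined by the vertices of `P` and of `Q`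
that maximize `u`. Scaling `u ≠ 0` so that some coordinate `u j` is `± 1`, the data
`(u, max_P u, max_Q u)` range over a polyhedron `{φ | φ (a i) ≤ β i}` in dimension
`(d - 1) + 2 = 2k + 2`, with one constraint per vertex, and faces of `P + Q` correspond to tight sets
of constraints. So it suffices to bound the number of tight sets of such a polyhedron in each of
the slices (`exposed_slice`, `totalFaces_le`).

Perturbing the right-hand sides makes the polyhedron simple, so that each vertex has exactly `2k + 2`
tight constraints, forming a basis. Linear programming on the perturbed polyhedron assigns to each
original tight set `Z` a subset `S` of the basis of some vertex from which `Z` can be recovered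
(`ncard_tight_le`); hence there are at most `2 ^ (2k + 2)` tight sets per vertex.

Vertices of the simple polyhedron are counted by Seidel's argument for the asymptotic upper bound
theorem (`ncard_vertices_le`). Fix a generic objective `h` with zero components in the two
coordinates `max_P u`, `max_Q u`. Each vertex is the unique maximum or minimum of `h` on a face given
by at most `k + 1` of its tight constraints. The choice of `h` forces those constraints to include a
vertex of `P` and a vertex of `Q`, so with `n` and `m` vertices there are at most
`n m (n + m) ^ (k - 1)` choices (`ncard_mixed_le`), which is `O(n m ^ k + m n ^ k)`.
-/

open Set Pointwise

/-- The combinatorial complexity of `C`: the number of nonempty exposed faces of `C`. -/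
noncomputable def totalFaces {N : ℕ} (C : Set (EuclideanSpace ℝ (Fin N))) : ℕ :=
  {F : Set (EuclideanSpace ℝ (Fin N)) | IsExposed ℝ C F ∧ F.Nonempty}.ncard


open Module

/-! ### Linear programming with generic right-hand sides -/

section Abstract

variable {ι E : Type*} [AddCommGroup E] [Module ℝ E]

/-- `φ` lies in the polyhedron `{φ | φ (a i) ≤ γ i for all i}` in the dual space. -/
def Feasible (a : ι → E) (γ : ι → ℝ) (φ : Dual ℝ E) : Prop := ∀ i, φ (a i) ≤ γ i

open Classical in
/-- The constraints `φ (a i) ≤ γ i` that hold with equality at `φ`. -/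
noncomputable def tight [Fintype ι] (a : ι → E) (γ : ι → ℝ) (φ : Dual ℝ E) : Finset ι :=
  Finset.univ.filter fun i => φ (a i) = γ i

lemma mem_tight [Fintype ι] {a : ι → E} {γ : ι → ℝ} {φ : Dual ℝ E} {i : ι} :
    i ∈ tight a γ φ ↔ φ (a i) = γ i := by
  simp [tight]

/-- `T` indexes a basis of `E`. That the vectors `a i`, `i ∈ T`, span is expressed dually: only the
zero functional vanishes on all of them. -/
def IsBase (a : ι → E) (T : Finset ι) : Prop :=
  LinearIndependent ℝ (fun i : T => a i) ∧ ∀ r : Dual ℝ E, (∀ i ∈ T, r (a i) = 0) → r = 0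

lemma IsBase.exists_coord {a : ι → E} {T : Finset ι} (h : IsBase a T) :
    T.card = finrank ℝ E ∧ ∃ co : ι → Dual ℝ E, (∀ i ∈ T, co i (a i) = 1) ∧
      (∀ i ∈ T, ∀ j ∈ T, i ≠ j → co i (a j) = 0) ∧
      ∀ x, ∑ i ∈ T, co i x • a i = x := by
  classical
  obtain ⟨hli, hsp⟩ := h
  have htop : ⊤ ≤ Submodule.span ℝ (Set.range fun i : T => a i) := by
    by_contra hlt
    obtain ⟨f, hf, hle⟩ := Submodule.exists_le_ker_of_lt_top
      (Submodule.span ℝ (Set.range fun i : T => a i)) (by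
        rw [lt_top_iff_ne_top]; intro h; exact hlt h.ge)
    apply hf
    apply hsp
    intro i hi
    exact hle (Submodule.subset_span ⟨⟨i, hi⟩, rfl⟩)
  let B := Basis.mk hli htop
  have hB : ∀ i : T, B i = a i := fun i => by simp [B]
  refine ⟨by simpa using (finrank_eq_card_basis B).symm,
    fun i => if h : i ∈ T then B.coord ⟨i, h⟩ else 0, ?_, ?_, ?_⟩
  · intro i hi
    have := hB ⟨i, hi⟩
    simp only [hi, dif_pos]
    rw [show a i = B ⟨i, hi⟩ from this.symm]
    simp
  · intro i hi j hj hij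
    simp only [hi, dif_pos]
    rw [show a j = B ⟨j, hj⟩ from (hB ⟨j, hj⟩).symm]
    simp [Ne.symm hij]
  · intro x
    rw [← Finset.sum_coe_sort]
    conv_rhs => rw [← B.sum_repr x]
    refine Finset.sum_congr rfl fun i _ => ?_
    simp [hB]

variable [Fintype ι]

/-- If evaluation at `ψ` is bounded on the polyhedron, then from any feasible `φ` one reaches a
feasible point whose tight vectors span, without decreasing the value at `ψ`. The number `N` bounds
the number of constraints not tight at `φ` and drives the induction. -/
lemma exists_vertex {a : ι → E} (hsp : ∀ r : Dual ℝ E, (∀ i, r (a i) = 0) → r = 0)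
    {γ : ι → ℝ} {ψ : E} {M : ℝ} (hM : ∀ φ, Feasible a γ φ → φ ψ ≤ M) :
    ∀ (N : ℕ) (φ : Dual ℝ E), Feasible a γ φ → Fintype.card ι - (tight a γ φ).card ≤ N →
      ∃ φ', Feasible a γ φ' ∧ φ ψ ≤ φ' ψ ∧
        ∀ r : Dual ℝ E, (∀ i ∈ tight a γ φ', r (a i) = 0) → r = 0 := by
  classical
  intro N
  induction N with
  | zero =>
    intro φ hφ hN
    refine ⟨φ, hφ, le_rfl, fun r hr => hsp r fun i => hr i ?_⟩
    have h1 : tight a γ φ = Finset.univ := by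
      apply Finset.eq_univ_of_card
      have := Finset.card_le_univ (tight a γ φ)
      omega
    rw [h1]; exact Finset.mem_univ i
  | succ N ih =>
    intro φ hφ hN
    by_cases hbase : ∀ r : Dual ℝ E, (∀ i ∈ tight a γ φ, r (a i) = 0) → r = 0
    · exact ⟨φ, hφ, le_rfl, hbase⟩
    push Not at hbase
    -- a direction along the tight constraints, not decreasing the value at `ψ`,
    -- along which some other constraint eventually becomes tight
    obtain ⟨r, hr, hrψ, i₀, hi₀⟩ : ∃ r : Dual ℝ E, (∀ i ∈ tight a γ φ, r (a i) = 0) ∧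
        0 ≤ r ψ ∧ ∃ i, 0 < r (a i) := by
      obtain ⟨r, hr, hr0⟩ := hbase
      have key : ∀ r : Dual ℝ E, 0 < r ψ → ∃ i, 0 < r (a i) := by
        intro r hpos
        by_contra! hcon
        have hb := hM (φ + ((M - φ ψ + 1) / r ψ) • r) (by
          intro i
          have h1 := hφ i
          have h2 := hcon i
          have h3 : 0 ≤ (M - φ ψ + 1) / r ψ := by
            have := hM φ hφ
            apply div_nonneg <;> linarith
          simp only [LinearMap.add_apply, LinearMap.smul_apply, smul_eq_mul]
          nlinarith)
        simp only [LinearMap.add_apply, LinearMap.smul_apply, smul_eq_mul] at hb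
        rw [div_mul_cancel₀ _ hpos.ne'] at hb
        linarith
      rcases lt_trichotomy (r ψ) 0 with h | h | h
      · exact ⟨-r, by simpa using hr, by simpa using h.le, key (-r) (by simpa using h)⟩
      · have : ∃ i, r (a i) ≠ 0 := by
          by_contra! hc; exact hr0 (hsp r hc)
        obtain ⟨i, hi⟩ := this
        rcases lt_or_gt_of_ne hi with hi | hi
        · exact ⟨-r, by simpa using hr, by simp [h], i, by simpa using hi⟩
        · exact ⟨r, hr, h.ge, i, hi⟩
      · exact ⟨r, hr, h.le, key r h⟩
    obtain ⟨i₁, hi₁, hmin⟩ := Finset.exists_min_image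
      (Finset.univ.filter fun i => 0 < r (a i)) (fun i => (γ i - φ (a i)) / r (a i))
      ⟨i₀, by simpa using hi₀⟩
    have hi₁' : 0 < r (a i₁) := by simpa using hi₁
    set t := (γ i₁ - φ (a i₁)) / r (a i₁) with ht
    have ht0 : 0 ≤ t := div_nonneg (by linarith [hφ i₁]) hi₁'.le
    have hfeas : Feasible a γ (φ + t • r) := by
      intro i
      simp only [LinearMap.add_apply, LinearMap.smul_apply, smul_eq_mul]
      rcases le_or_gt (r (a i)) 0 with h | h
      · nlinarith [hφ i]
      · have := hmin i (by simpa using h)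
        rw [le_div_iff₀ h] at this
        linarith
    have hnot : i₁ ∉ tight a γ φ := fun h => hi₁'.ne' (hr i₁ h)
    have hsub : insert i₁ (tight a γ φ) ⊆ tight a γ (φ + t • r) := by
      intro i hi
      rw [mem_tight]
      simp only [LinearMap.add_apply, LinearMap.smul_apply, smul_eq_mul]
      rcases Finset.mem_insert.1 hi with rfl | hi
      · rw [ht, div_mul_cancel₀ _ hi₁'.ne']; ring
      · rw [hr i hi, mem_tight.1 hi]; ring
    have hcard := Finset.card_le_card hsub
    rw [Finset.card_insert_of_notMem hnot] at hcard
    obtain ⟨φ', h1, h2, h3⟩ := ih (φ + t • r) hfeas (by omega)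
    refine ⟨φ', h1, le_trans ?_ h2, h3⟩
    simp only [LinearMap.add_apply, LinearMap.smul_apply, smul_eq_mul]
    nlinarith

/-- Linear programming for generic right-hand sides `γ`: some vertex maximizes evaluation at
`ψ = ∑ i ∈ Z, a i`, and optimality says that `ψ` lies in the cone generated by its basis. -/
lemma exists_optimal_base {a : ι → E} (hsp : ∀ r : Dual ℝ E, (∀ i, r (a i) = 0) → r = 0)
    {γ : ι → ℝ} (hgen : ∀ φ : Dual ℝ E, LinearIndependent ℝ (fun i : tight a γ φ => a i))
    (hne : ∃ φ, Feasible a γ φ) (Z : Finset ι) :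
    ∃ φ, Feasible a γ φ ∧ IsBase a (tight a γ φ) ∧ ∃ c : ι → ℝ, (∀ i, 0 ≤ c i) ∧
      ∑ i ∈ tight a γ φ, c i • a i = ∑ i ∈ Z, a i := by
  classical
  set ψ := ∑ i ∈ Z, a i with hψ
  have hM : ∀ φ, Feasible a γ φ → φ ψ ≤ ∑ i ∈ Z, γ i := by
    intro φ hφ
    rw [hψ, map_sum]
    exact Finset.sum_le_sum fun i _ => hφ i
  -- a vertex is determined by its tight set, so there are finitely many
  let 𝒯 : Set (Dual ℝ E) := {φ | Feasible a γ φ ∧ IsBase a (tight a γ φ)}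
  have hfin : 𝒯.Finite := by
    apply Set.Finite.of_injOn (f := tight a γ) (t := Set.univ) (fun _ _ => Set.mem_univ _) _
      (Set.toFinite _)
    intro φ hφ φ' hφ' h
    have : φ - φ' = 0 := hφ.2.2 _ fun i hi => by
      have h1 := mem_tight.1 hi
      have h2 := mem_tight.1 (h ▸ hi)
      simp [h1, h2]
    exact sub_eq_zero.1 this
  obtain ⟨φ₀, hφ₀⟩ := hne
  have hv : ∀ φ, Feasible a γ φ → ∃ φ' ∈ 𝒯, φ ψ ≤ φ' ψ := fun φ hφ => by
    obtain ⟨φ', h1, h2, h3⟩ := exists_vertex hsp hM _ φ hφ le_rfl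
    exact ⟨φ', ⟨h1, hgen φ', h3⟩, h2⟩
  obtain ⟨φ₁, hφ₁, -⟩ := hv φ₀ hφ₀
  obtain ⟨φ, hφ, hmax⟩ := Set.exists_max_image 𝒯 (fun φ => φ ψ) hfin ⟨φ₁, hφ₁⟩
  have hopt : ∀ φ', Feasible a γ φ' → φ' ψ ≤ φ ψ := fun φ' h => by
    obtain ⟨φ'', h1, h2⟩ := hv φ' h
    exact h2.trans (hmax φ'' h1)
  obtain ⟨-, co, hco1, hco0, hsum⟩ := hφ.2.exists_coord
  refine ⟨φ, hφ.1, hφ.2, fun i => if i ∈ tight a γ φ then co i ψ else 0, fun i => ?_, ?_⟩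
  · dsimp only
    split_ifs with hi
    swap
    · exact le_rfl
    by_contra! hneg
    -- moving by `-δ • co i` stays feasible for small `δ > 0` and increases the value at `ψ`
    have hev : ∀ᶠ δ in nhdsWithin (0 : ℝ) (Set.Ioi 0), ∀ j, (φ + (-δ) • co i) (a j) ≤ γ j := by
      rw [Filter.eventually_all]
      intro j
      simp only [LinearMap.add_apply, LinearMap.smul_apply, smul_eq_mul]
      by_cases hj : j ∈ tight a γ φ
      · filter_upwards [self_mem_nhdsWithin] with δ hδ
        have hδ : 0 < δ := hδ
        have h1 := mem_tight.1 hj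
        by_cases hij : i = j
        · subst hij; rw [hco1 i hi]; linarith
        · rw [hco0 i hi j hj hij]; linarith
      · have hlt : φ (a j) < γ j := lt_of_le_of_ne (hφ.1 j) fun h => hj (mem_tight.2 h)
        have hc : Filter.Tendsto (fun δ : ℝ => φ (a j) + -δ * co i (a j))
            (nhdsWithin 0 (Set.Ioi 0)) (nhds (φ (a j) + -0 * co i (a j))) :=
          tendsto_nhdsWithin_of_tendsto_nhds (Continuous.tendsto (by fun_prop) 0)
        have := hc.eventually_lt_const (u := γ j) (by simpa using hlt)
        filter_upwards [this] with δ hδ using le_of_lt hδ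
    obtain ⟨δ, hδ, hδ0⟩ := (hev.and self_mem_nhdsWithin).exists
    have hδ0 : 0 < δ := hδ0
    have := hopt _ hδ
    simp only [LinearMap.add_apply, LinearMap.smul_apply, smul_eq_mul] at this
    nlinarith
  · rw [← hsum ψ]
    refine Finset.sum_congr rfl fun i hi => ?_
    rw [hsum ψ]
    simp [hi]

/-! ### Perturbation -/

/-- Right-hand sides `γ = β + ε b`, with `b` generic and `ε > 0` small, make all tight families
linearly independent, and satisfy no inequality of a given finite list that fails strictly at `β`. -/
lemma exists_perturbation (a : ι → E) (β : ι → ℝ) {J : Type*} [Finite J] (c : J → ι → ℝ) :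
    ∃ γ : ι → ℝ, (∀ φ : Dual ℝ E, LinearIndependent ℝ (fun i : tight a γ φ => a i)) ∧
      ∀ j, ∑ i, c j i * γ i ≤ 0 → ∑ i, c j i * β i ≤ 0 := by
  classical
  -- a nontrivial relation for each dependent subfamily
  let D := {T : Finset ι // ¬ LinearIndependent ℝ (fun i : T => a i)}
  have hD : ∀ T : D, ∃ l : ι → ℝ, (∃ i, l i ≠ 0) ∧ (∀ i ∉ T.1, l i = 0) ∧
      ∑ i, l i • a i = 0 := by
    rintro ⟨T, hT⟩
    have hT' : ¬ LinearIndepOn ℝ a (T : Set ι) := hT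
    rw [linearIndepOn_finset_iff] at hT'
    push Not at hT'
    obtain ⟨f, hf, i, hi, hne⟩ := hT'
    refine ⟨fun i => if i ∈ T then f i else 0, ⟨i, by simpa [hi] using hne⟩,
      fun i hi => by simpa using fun h => absurd h hi, ?_⟩
    rw [← hf]
    simp [ite_smul, Finset.sum_ite_mem]
  choose l hl0 hlT hl using hD
  let f : D → Dual ℝ (ι → ℝ) := fun T => ∑ i, l T i • LinearMap.proj i
  have hf : ∀ T x, f T x = ∑ i, l T i * x i := fun T x => by
    simp [f, LinearMap.sum_apply]
  obtain ⟨b, hb⟩ := Module.Dual.exists_forall_ne_zero_of_forall_exists f (by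
    intro T
    obtain ⟨i, hi⟩ := hl0 T
    refine ⟨Pi.single i 1, ?_⟩
    simpa [hf, Pi.single_apply] using hi)
  have ev1 : ∀ᶠ ε in nhdsWithin (0 : ℝ) (Set.Ioi 0), ∀ T, f T (β + ε • b) ≠ 0 := by
    rw [Filter.eventually_all]
    intro T
    by_cases h0 : f T β = 0
    · filter_upwards [self_mem_nhdsWithin] with ε hε
      have hε : 0 < ε := hε
      simp [h0, hb T, hε.ne']
    · have hc : Filter.Tendsto (fun ε : ℝ => f T β + ε * f T b)
          (nhdsWithin 0 (Set.Ioi 0)) (nhds (f T β + 0 * f T b)) :=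
        tendsto_nhdsWithin_of_tendsto_nhds (Continuous.tendsto (by fun_prop) 0)
      filter_upwards [hc.eventually_ne (b₂ := 0) (by simpa using h0)] with ε hε
      simpa using hε
  have ev2 : ∀ᶠ ε in nhdsWithin (0 : ℝ) (Set.Ioi 0), ∀ j,
      ∑ i, c j i * (β + ε • b) i ≤ 0 → ∑ i, c j i * β i ≤ 0 := by
    rw [Filter.eventually_all]
    intro j
    by_cases h0 : ∑ i, c j i * β i ≤ 0
    · exact Filter.Eventually.of_forall fun _ _ => h0
    · have hc : Filter.Tendsto (fun ε : ℝ => ∑ i, c j i * (β + ε • b) i)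
          (nhdsWithin 0 (Set.Ioi 0)) (nhds (∑ i, c j i * (β + (0 : ℝ) • b) i)) := by
        apply tendsto_nhdsWithin_of_tendsto_nhds
        apply Continuous.tendsto (f := fun ε : ℝ => ∑ i, c j i * (β + ε • b) i)
        simp only [Pi.add_apply, Pi.smul_apply, smul_eq_mul]
        fun_prop
      filter_upwards [hc.eventually_const_lt (u := 0) (by simpa using h0)] with ε hε h
      exact absurd h (not_le.2 hε)
  obtain ⟨ε, h1, h2⟩ := (ev1.and ev2).exists
  refine ⟨β + ε • b, fun φ => ?_, h2⟩
  by_contra hdep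
  apply h1 ⟨_, hdep⟩
  rw [hf]
  have h3 := congrArg φ (hl ⟨_, hdep⟩)
  rw [map_sum, map_zero] at h3
  rw [← h3]
  refine Finset.sum_congr rfl fun i _ => ?_
  rw [map_smul, smul_eq_mul]
  by_cases hi : i ∈ tight a (β + ε • b) φ
  · rw [mem_tight.1 hi]
  · rw [hlT ⟨_, hdep⟩ i hi, zero_mul, zero_mul]

/-- Perturbing the right-hand sides turns faces into subsets of vertices. For a tight set `Z` of
the original polyhedron, `∑ i ∈ Z, a i` is a nonnegative combination of the basis `T` of a vertex of
the perturbed polyhedron; the support `S ⊆ T` of this combination determines `Z` as the least tight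
set containing `S`. Each `T` has `2 ^ finrank` subsets. -/
lemma ncard_tight_le (a : ι → E) (hsp : ∀ r : Dual ℝ E, (∀ i, r (a i) = 0) → r = 0)
    (hne : ∀ γ : ι → ℝ, ∃ φ, Feasible a γ φ) (β : ι → ℝ) :
    ∃ γ : ι → ℝ, {Z | ∃ φ, Feasible a β φ ∧ tight a β φ = Z}.ncard ≤
      {T | ∃ φ, Feasible a γ φ ∧ tight a γ φ = T ∧ IsBase a T}.ncard * 2 ^ finrank ℝ E := by
  classical
  -- `C (T, Z)` is a fixed nonnegative expression of `∑ i ∈ Z, a i` in the `a i`, `i ∈ T`, if any;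
  -- fixing it beforehand leaves finitely many inequalities to control under the perturbation
  let Q : Finset ι × Finset ι → (ι → ℝ) → Prop := fun p c => (∀ i, 0 ≤ c i) ∧
    (∀ i ∉ p.1, c i = 0) ∧ ∑ i, c i • a i = ∑ i ∈ p.2, a i
  let C : Finset ι × Finset ι → ι → ℝ := fun p => if h : ∃ c, Q p c then h.choose else 0
  have hC : ∀ p, (∃ c, Q p c) → Q p (C p) := fun p h => by
    simp only [C, dif_pos h]; exact h.choose_spec
  obtain ⟨γ, hgen, hγ⟩ := exists_perturbation a β
    (fun p : Finset ι × Finset ι => fun i => C p i - if i ∈ p.2 then 1 else 0)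
  have hconv : ∀ p (δ : ι → ℝ), ∑ i, (C p i - if i ∈ p.2 then 1 else 0) * δ i =
      ∑ i, C p i * δ i - ∑ i ∈ p.2, δ i := fun p δ => by
    simp [sub_mul, Finset.sum_sub_distrib]
  refine ⟨γ, ?_⟩
  set 𝒯 : Set (Finset ι) := {T | ∃ φ, Feasible a γ φ ∧ tight a γ φ = T ∧ IsBase a T} with h𝒯
  -- `S` is the support of an expression of `∑ i ∈ Z, a i` in the basis of an optimal vertex
  have key : ∀ Z ∈ {Z | ∃ φ, Feasible a β φ ∧ tight a β φ = Z}, ∃ S : Finset ι,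
      (∃ T ∈ 𝒯, S ⊆ T) ∧ S ⊆ Z ∧
        ∀ φ, Feasible a β φ → S ⊆ tight a β φ → Z ⊆ tight a β φ := by
    rintro Z ⟨φX, hX, rfl⟩
    set Z := tight a β φX with hZ
    obtain ⟨φ, hφ, hbase, c, hc0, hc⟩ := exists_optimal_base hsp hgen (hne γ) Z
    set T := tight a γ φ with hT
    obtain ⟨hC0, hCT, hCsum⟩ := hC (T, Z) ⟨fun i => if i ∈ T then c i else 0, fun i => by
      dsimp only; split_ifs; exacts [hc0 i, le_rfl], fun i hi => if_neg hi, by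
      simpa [ite_smul, Finset.sum_ite_mem] using hc⟩
    simp only at hCT hCsum
    set c' := C (T, Z) with hc'
    have hev : ∀ ξ : Dual ℝ E, ∑ i, c' i * ξ (a i) = ∑ i ∈ Z, ξ (a i) := fun ξ => by
      have := congrArg ξ hCsum
      simpa [map_sum] using this
    have hle : ∑ i, c' i * β i ≤ ∑ i ∈ Z, β i := by
      have h1 := hγ (T, Z)
      rw [hconv, hconv] at h1
      have h2 : ∑ i, c' i * γ i = ∑ i, c' i * φ (a i) := by
        refine Finset.sum_congr rfl fun i _ => ?_
        by_cases hi : i ∈ T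
        · rw [mem_tight.1 hi]
        · rw [hCT i hi, zero_mul, zero_mul]
      have h3 : ∑ i ∈ Z, φ (a i) ≤ ∑ i ∈ Z, γ i := Finset.sum_le_sum fun i _ => hφ i
      have := h1 (by rw [h2, hev]; linarith)
      linarith
    refine ⟨Finset.univ.filter fun i => 0 < c' i, ⟨T, ⟨φ, hφ, rfl, hbase⟩, ?_⟩, ?_, ?_⟩
    · intro i hi
      by_contra hiT
      simp [hCT i hiT] at hi
    · intro i hi
      have hpos : 0 < c' i := by simpa using hi
      have h1 : ∑ i, c' i * (β i - φX (a i)) ≤ 0 := by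
        simp only [mul_sub, Finset.sum_sub_distrib]
        rw [hev, Finset.sum_congr rfl fun i hi => mem_tight.1 hi]
        linarith
      have h2 : ∀ i ∈ Finset.univ, 0 ≤ c' i * (β i - φX (a i)) := fun i _ =>
        mul_nonneg (hC0 i) (by linarith [hX i])
      have h3 := (Finset.sum_eq_zero_iff_of_nonneg h2).1
        (le_antisymm h1 (Finset.sum_nonneg h2)) i (Finset.mem_univ i)
      rw [hZ, mem_tight]
      rcases mul_eq_zero.1 h3 with h | h <;> linarith
    · intro φ' hφ' hS
      have h0 : ∑ i ∈ Z, (β i - φ' (a i)) ≤ 0 := by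
        rw [Finset.sum_sub_distrib, ← hev]
        have h1 : ∑ i, c' i * φ' (a i) = ∑ i, c' i * β i := by
          refine Finset.sum_congr rfl fun i _ => ?_
          rcases (hC0 i).eq_or_lt with h | h
          · rw [← h, zero_mul, zero_mul]
          · rw [mem_tight.1 (hS (by simpa using h))]
        have h2 : ∑ i, c' i * φX (a i) ≤ ∑ i, c' i * β i :=
          Finset.sum_le_sum fun i _ => mul_le_mul_of_nonneg_left (hX i) (hC0 i)
        rw [hev, Finset.sum_congr rfl fun i hi => mem_tight.1 hi] at h2
        linarith
      have h2 : ∀ i ∈ Z, 0 ≤ β i - φ' (a i) := fun i _ => by linarith [hφ' i]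
      intro i hi
      have h3 := (Finset.sum_eq_zero_iff_of_nonneg h2).1
        (le_antisymm h0 (Finset.sum_nonneg h2)) i hi
      rw [mem_tight]; linarith
  choose! S hST hSZ hgenS using key
  have h𝒯fin : 𝒯.Finite := Set.toFinite _
  calc _ ≤ ((h𝒯fin.toFinset.biUnion Finset.powerset : Finset (Finset ι)) :
          Set (Finset ι)).ncard := by
        refine Set.ncard_le_ncard_of_injOn S ?_ ?_ (Set.toFinite _)
        · intro Z hZ
          obtain ⟨T, hT, hS⟩ := hST Z hZ
          simp only [Finset.coe_biUnion, Set.mem_iUnion]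
          exact ⟨T, h𝒯fin.mem_toFinset.2 hT, Finset.mem_coe.2 (Finset.mem_powerset.2 hS)⟩
        · intro Z hZ Z' hZ' h
          obtain ⟨φ, hφ, h1⟩ := hZ
          obtain ⟨φ', hφ', h1'⟩ := hZ'
          apply Finset.Subset.antisymm
          · rw [← h1']
            exact hgenS Z ⟨φ, hφ, h1⟩ φ' hφ' (by rw [h1', h]; exact hSZ Z' ⟨φ', hφ', h1'⟩)
          · rw [← h1]
            exact hgenS Z' ⟨φ', hφ', h1'⟩ φ hφ (by rw [h1, ← h]; exact hSZ Z ⟨φ, hφ, h1⟩)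
    _ ≤ _ := by
        rw [Set.ncard_coe_finset, Set.ncard_eq_toFinset_card _ h𝒯fin]
        apply Finset.card_biUnion_le_card_mul
        intro T hT
        obtain ⟨φ, -, -, hb⟩ := h𝒯fin.mem_toFinset.1 hT
        rw [Finset.card_powerset, hb.exists_coord.1]

/-! ### Counting vertices -/

/-- Seidel's argument. A vertex with basis `T` is the unique maximizer (minimizer) of a functional `h`
on the face whose tight set is the part of `T` where `h` has nonpositive (nonnegative) coordinates.
One of the two parts has at most `k + 1` elements. Because `p b h = 0`, the coordinates of `h` in each
class of `κ` sum to zero, so each part meets both classes. -/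
lemma ncard_vertices_le (a : ι → E) (κ : ι → Bool) (p : Bool → Dual ℝ E)
    (hp : ∀ b i, p b (a i) = if κ i = b then 1 else 0) (hκ : ∀ b, ∃ i, κ i = b)
    (k : ℕ) (hk : 1 ≤ k) (hE : finrank ℝ E = 2 * k + 2) (γ : ι → ℝ) :
    {T | ∃ φ, Feasible a γ φ ∧ tight a γ φ = T ∧ IsBase a T}.ncard ≤
      2 * {G : Finset ι | G.card ≤ k + 1 ∧ ∀ b, ∃ i ∈ G, κ i = b}.ncard := by
  classical
  have hex : ∀ T : Finset ι, ∃ co : ι → Dual ℝ E, IsBase a T → (∀ i ∈ T, co i (a i) = 1) ∧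
      (∀ i ∈ T, ∀ j ∈ T, i ≠ j → co i (a j) = 0) ∧ ∀ x, ∑ i ∈ T, co i x • a i = x := by
    intro T
    by_cases h : IsBase a T
    · obtain ⟨-, co, h⟩ := h.exists_coord
      exact ⟨co, fun _ => h⟩
    · exact ⟨0, fun h' => absurd h' h⟩
  choose co hco using hex
  -- a generic objective in the common kernel of the two `p b`
  let J := {x : Finset ι × ι // IsBase a x.1 ∧ x.2 ∈ x.1 ∧ ∃ j ∈ x.1, x.2 ≠ j ∧ κ x.2 = κ j}
  obtain ⟨h, hh, hgen⟩ := Module.Dual.exists_forall_mem_ne_zero_of_forall_exists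
    (⨅ b, LinearMap.ker (p b)) (fun x : J => co x.1.1 x.1.2) (by
      rintro ⟨⟨T, i⟩, hT, hi, j, hj, hij, hκij⟩
      refine ⟨a i - a j, ?_, ?_⟩
      · rw [Submodule.mem_iInf]
        intro b
        simp only at hκij
        simp [hp, hκij]
      · simp only at *
        rw [map_sub, (hco T hT).1 i hi, (hco T hT).2.1 i hi j hj hij]
        simp)
  rw [Submodule.mem_iInf] at hh
  let lo : Finset ι → Finset ι := fun T => T.filter fun i => co T i h ≤ 0
  let hi : Finset ι → Finset ι := fun T => T.filter fun i => 0 ≤ co T i h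
  set 𝒯 : Set (Finset ι) := {T | ∃ φ, Feasible a γ φ ∧ tight a γ φ = T ∧ IsBase a T} with h𝒯
  set 𝒢 : Set (Finset ι) := {G : Finset ι | G.card ≤ k + 1 ∧ ∀ b, ∃ i ∈ G, κ i = b} with h𝒢
  have hmix : ∀ T, IsBase a T → ∀ b, (∃ i ∈ lo T, κ i = b) ∧ (∃ i ∈ hi T, κ i = b) := by
    intro T hT b
    have hsum : ∑ i ∈ T.filter (fun i => κ i = b), co T i h = 0 := by
      have h1 := congrArg (p b) ((hco T hT).2.2 h)
      rw [LinearMap.mem_ker.1 (hh b), map_sum] at h1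
      simpa [hp, Finset.sum_filter] using h1
    have hne : (T.filter (fun i => κ i = b)).Nonempty := by
      by_contra hemp
      rw [Finset.not_nonempty_iff_eq_empty, Finset.filter_eq_empty_iff] at hemp
      have h0 := hT.2 (p b) fun i hi => by simp [hp, hemp hi]
      obtain ⟨i, hi⟩ := hκ b
      have := hp b i
      simp [h0, hi] at this
    constructor
    · obtain ⟨i, hi, hle⟩ := Finset.exists_le_of_sum_le hne
        (f := fun i => co T i h) (g := fun _ => 0) (by simp [hsum])
      rw [Finset.mem_filter] at hi
      exact ⟨i, Finset.mem_filter.2 ⟨hi.1, hle⟩, hi.2⟩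
    · obtain ⟨i, hi, hle⟩ := Finset.exists_le_of_sum_le hne
        (g := fun i => co T i h) (f := fun _ => 0) (by simp [hsum])
      rw [Finset.mem_filter] at hi
      exact ⟨i, Finset.mem_filter.2 ⟨hi.1, hle⟩, hi.2⟩
  have hcard : ∀ T, IsBase a T → (lo T).card ≤ k + 1 ∨ (hi T).card ≤ k + 1 := by
    intro T hT
    have hTc := hT.exists_coord.1
    have h1 : lo T ∪ hi T = T := by
      simp only [lo, hi]
      rw [← Finset.filter_or]
      exact Finset.filter_true_of_mem fun i _ => le_total _ _
    have h2 := Finset.card_union_add_card_inter (lo T) (hi T)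
    rw [h1] at h2
    have h3 : (lo T ∩ hi T).card ≤ 1 := by
      rw [Finset.card_le_one]
      -- a vanishing coordinate belongs to an element that is alone in its class
      have hz : ∀ i ∈ lo T ∩ hi T, i ∈ T ∧ ∀ j ∈ T, κ i = κ j → i = j := by
        intro i hi'
        simp only [lo, hi, Finset.mem_inter, Finset.mem_filter] at hi'
        refine ⟨hi'.1.1, fun j hj hij => ?_⟩
        by_contra hne
        exact hgen ⟨(T, i), hT, hi'.1.1, j, hj, hne, hij⟩ (le_antisymm hi'.1.2 hi'.2.2)
      intro i hi j hj
      by_contra hij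
      obtain ⟨hiT, hi⟩ := hz i hi
      obtain ⟨hjT, hj⟩ := hz j hj
      have hκij : κ i ≠ κ j := fun h => hij (hi j hjT h)
      have hsub : T ⊆ {i, j} := by
        intro x hx
        have : κ i = κ x ∨ κ j = κ x := by
          cases h1 : κ i <;> cases h2 : κ j <;> cases h3 : κ x <;> simp_all
        rcases this with h | h
        · simp [hi x hx h]
        · simp [hj x hx h]
      have := (Finset.card_le_card hsub).trans Finset.card_le_two
      omega
    omega
  have hval : ∀ T, IsBase a T → ∀ φ : Dual ℝ E, φ h = ∑ i ∈ T, co T i h * φ (a i) := by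
    intro T hT φ
    have := congrArg φ ((hco T hT).2.2 h)
    rw [← this]
    simp [map_sum]
  -- two vertices with the same part are both optimal on the same face, hence equal
  have huniq : ∀ (s : Bool), ∀ T ∈ 𝒯, ∀ T' ∈ 𝒯,
      (if s then lo T else hi T) = (if s then lo T' else hi T') → T = T' := by
    have aux : ∀ (s : ℝ), ∀ T, IsBase a T → ∀ φ φ', Feasible a γ φ → Feasible a γ φ' →
        tight a γ φ = T → (∀ i ∈ T, s * co T i h ≤ 0 → i ∈ tight a γ φ') →
        s * φ' h ≤ s * φ h ∧ (s * φ h ≤ s * φ' h → T ⊆ tight a γ φ') := by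
      intro s T hT φ φ' hφ hφ' hTφ hG
      have hle : ∀ i ∈ T, 0 ≤ (s * co T i h) * (φ (a i) - φ' (a i)) := by
        intro i hi'
        have h1 : φ (a i) = γ i := mem_tight.1 (hTφ ▸ hi')
        rcases le_or_gt (s * co T i h) 0 with h0 | h0
        · rw [h1, mem_tight.1 (hG i hi' h0)]; simp
        · exact mul_nonneg h0.le (by linarith [hφ' i])
      have heq : s * φ h - s * φ' h = ∑ i ∈ T, (s * co T i h) * (φ (a i) - φ' (a i)) := by
        rw [hval T hT φ, hval T hT φ', Finset.mul_sum, Finset.mul_sum, ← Finset.sum_sub_distrib]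
        exact Finset.sum_congr rfl fun i _ => by ring
      refine ⟨by linarith [Finset.sum_nonneg hle], fun hge i hi' => ?_⟩
      rcases le_or_gt (s * co T i h) 0 with h0 | h0
      · exact hG i hi' h0
      · have h4 := (Finset.sum_eq_zero_iff_of_nonneg hle).1
          (le_antisymm (by linarith) (Finset.sum_nonneg hle)) i hi'
        have h1 : φ (a i) = γ i := mem_tight.1 (hTφ ▸ hi')
        rw [mem_tight]
        rcases mul_eq_zero.1 h4 with h5 | h5 <;> linarith
    rintro s T ⟨φ, hφ, hTφ, hT⟩ T' ⟨φ', hφ', hTφ', hT'⟩ heq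
    obtain ⟨σ, hσ⟩ : ∃ σ : ℝ, ∀ U, (if s then lo U else hi U) =
        U.filter fun i => σ * co U i h ≤ 0 := by
      cases s
      · exact ⟨-1, fun U => by simp [hi]⟩
      · exact ⟨1, fun U => by simp [lo]⟩
    rw [hσ, hσ] at heq
    have hA := aux σ T hT φ φ' hφ hφ' hTφ fun i hi' h0 => by
      have : i ∈ T'.filter fun i => σ * co T' i h ≤ 0 := heq ▸ Finset.mem_filter.2 ⟨hi', h0⟩
      rw [hTφ']; exact (Finset.mem_filter.1 this).1
    have hB := aux σ T' hT' φ' φ hφ' hφ hTφ' fun i hi' h0 => by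
      have : i ∈ T.filter fun i => σ * co T i h ≤ 0 := heq ▸ Finset.mem_filter.2 ⟨hi', h0⟩
      rw [hTφ]; exact (Finset.mem_filter.1 this).1
    apply Finset.Subset.antisymm
    · rw [← hTφ']; exact hA.2 hB.1
    · rw [← hTφ]; exact hB.2 hA.1
  have hsplit : 𝒯 ⊆ {T ∈ 𝒯 | lo T ∈ 𝒢} ∪ {T ∈ 𝒯 | hi T ∈ 𝒢} := by
    intro T hT
    have hb : IsBase a T := by obtain ⟨_, -, -, h⟩ := hT; exact h
    rcases hcard T hb with h1 | h1
    · exact Or.inl ⟨hT, h1, fun b => (hmix T hb b).1⟩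
    · exact Or.inr ⟨hT, h1, fun b => (hmix T hb b).2⟩
  have hlo : {T ∈ 𝒯 | lo T ∈ 𝒢}.ncard ≤ 𝒢.ncard :=
    Set.ncard_le_ncard_of_injOn lo (fun T hT => hT.2)
      (fun T hT T' hT' h => huniq true T hT.1 T' hT'.1 (by simpa using h)) (Set.toFinite _)
  have hhi : {T ∈ 𝒯 | hi T ∈ 𝒢}.ncard ≤ 𝒢.ncard :=
    Set.ncard_le_ncard_of_injOn hi (fun T hT => hT.2)
      (fun T hT T' hT' h => huniq false T hT.1 T' hT'.1 (by simpa using h)) (Set.toFinite _)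
  have h1 := Set.ncard_le_ncard hsplit (Set.toFinite _)
  have h2 := Set.ncard_union_le {T ∈ 𝒯 | lo T ∈ 𝒢} {T ∈ 𝒯 | hi T ∈ 𝒢}
  omega

/-- A set of at most `k + 1` labels meeting both classes is listed by one label of each class
followed by `k - 1` arbitrary labels. -/
lemma ncard_mixed_le (κ : ι → Bool) (k : ℕ) (hk : 1 ≤ k) :
    {G : Finset ι | G.card ≤ k + 1 ∧ ∀ b, ∃ i ∈ G, κ i = b}.ncard ≤
      Nat.card {i // κ i = true} * Nat.card {i // κ i = false} * Fintype.card ι ^ (k - 1) := by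
  classical
  let X := {i // κ i = true} × {i // κ i = false} × (Fin (k - 1) → ι)
  let f : X → Finset ι := fun x => insert x.1.1 (insert x.2.1.1 (Finset.univ.image x.2.2))
  have hsub : {G : Finset ι | G.card ≤ k + 1 ∧ ∀ b, ∃ i ∈ G, κ i = b} ⊆ Set.image f Set.univ := by
    rintro G ⟨hG, hb⟩
    obtain ⟨x, hx, hxt⟩ := hb true
    obtain ⟨y, hy, hyf⟩ := hb false
    have hxy : x ≠ y := by rintro rfl; simp [hxt] at hyf
    set R := (G.erase x).erase y with hR
    have hRc : R.card ≤ k - 1 := by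
      rw [hR, Finset.card_erase_of_mem (Finset.mem_erase.2 ⟨hxy.symm, hy⟩),
        Finset.card_erase_of_mem hx]
      omega
    refine ⟨(⟨x, hxt⟩, ⟨y, hyf⟩, fun j => R.toList.getD j x), Set.mem_univ _, ?_⟩
    ext i
    simp only [f, Finset.mem_insert, Finset.mem_image, Finset.mem_univ, true_and]
    constructor
    · rintro (rfl | rfl | ⟨j, rfl⟩)
      · exact hx
      · exact hy
      · by_cases hj : (j : ℕ) < R.toList.length
        · rw [List.getD_eq_getElem _ _ hj]
          have : R.toList[(j : ℕ)] ∈ R := Finset.mem_toList.1 (List.getElem_mem hj)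
          exact Finset.mem_of_mem_erase (Finset.mem_of_mem_erase this)
        · rw [List.getD_eq_default _ _ (not_lt.1 hj)]; exact hx
    · intro hi
      by_cases h1 : i = x
      · exact Or.inl h1
      by_cases h2 : i = y
      · exact Or.inr (Or.inl h2)
      have hiR : i ∈ R.toList := Finset.mem_toList.2
        (Finset.mem_erase.2 ⟨h2, Finset.mem_erase.2 ⟨h1, hi⟩⟩)
      obtain ⟨j, hj, hji⟩ := List.getElem_of_mem hiR
      refine Or.inr (Or.inr ⟨⟨j, ?_⟩, ?_⟩)
      · rw [Finset.length_toList] at hj; omega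
      · simp only
        rw [List.getD_eq_getElem _ _ hj, hji]
  calc _ ≤ (Set.image f Set.univ).ncard := Set.ncard_le_ncard hsub (Set.toFinite _)
    _ ≤ (Set.univ : Set X).ncard := Set.ncard_image_le (Set.toFinite _)
    _ = _ := by
      rw [Set.ncard_univ]
      rw [show Nat.card X = _ from Nat.card_prod _ _, Nat.card_prod, Nat.card_fun]
      simp only [Nat.card_eq_fintype_card, Fintype.card_fin]
      ring

lemma ncard_tight_le_of_colored (a : ι → E)
    (hsp : ∀ r : Dual ℝ E, (∀ i, r (a i) = 0) → r = 0) (κ : ι → Bool) (p : Bool → Dual ℝ E)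
    (hp : ∀ b i, p b (a i) = if κ i = b then 1 else 0) (hκ : ∀ b, ∃ i, κ i = b)
    (k : ℕ) (hk : 1 ≤ k) (hE : finrank ℝ E = 2 * k + 2) (β : ι → ℝ) :
    {Z | ∃ φ, Feasible a β φ ∧ tight a β φ = Z}.ncard ≤
      2 ^ (2 * k + 3) * (Nat.card {i // κ i = true} * Nat.card {i // κ i = false} *
        Fintype.card ι ^ (k - 1)) := by
  have hne : ∀ γ : ι → ℝ, ∃ φ, Feasible a γ φ := by
    intro γ
    refine ⟨(-∑ j, |γ j|) • (p true + p false), fun i => ?_⟩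
    have h1 : (p true + p false) (a i) = 1 := by
      cases h : κ i <;> simp [hp, h]
    rw [LinearMap.smul_apply, h1, smul_eq_mul, mul_one]
    have h2 : |γ i| ≤ ∑ j, |γ j| :=
      Finset.single_le_sum (f := fun j => |γ j|) (fun j _ => abs_nonneg _) (Finset.mem_univ i)
    linarith [neg_abs_le (γ i)]
  obtain ⟨γ, h1⟩ := ncard_tight_le a hsp hne β
  have h2 := ncard_vertices_le a κ p hp hκ k hk hE γ
  have h3 := ncard_mixed_le κ k hk
  rw [hE] at h1
  refine h1.trans ((Nat.mul_le_mul_right _ (h2.trans (Nat.mul_le_mul_left 2 h3))).trans ?_)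
  rw [pow_succ 2 (2 * k + 2)]
  apply le_of_eq
  ring

end Abstract

/-! ### Faces of a Minkowski sum as tight sets -/

section Geometry

variable {d : ℕ}

local notation "𝔼" => EuclideanSpace ℝ (Fin d)

lemma mem_convexHull_filter (A : Finset 𝔼) (l : 𝔼 →L[ℝ] ℝ) {M : ℝ} (hM : ∀ v ∈ A, l v ≤ M) {x : 𝔼}
    (hx : x ∈ convexHull ℝ (A : Set 𝔼)) :
    l x ≤ M ∧ (l x = M → x ∈ convexHull ℝ {v | v ∈ A ∧ l v = M}) := by
  classical
  obtain ⟨w, hw0, hw1, hwx⟩ := Finset.mem_convexHull'.1 hx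
  have hlx : M - l x = ∑ v ∈ A, w v * (M - l v) := by
    rw [← hwx, map_sum]
    simp only [mul_sub, Finset.sum_sub_distrib, ← Finset.sum_mul, hw1, map_smul, smul_eq_mul,
      one_mul]
  have hnn : ∀ v ∈ A, 0 ≤ w v * (M - l v) := fun v hv =>
    mul_nonneg (hw0 v hv) (by linarith [hM v hv])
  refine ⟨by linarith [Finset.sum_nonneg hnn], fun hx => ?_⟩
  have hzero : ∀ v ∈ A, v ∉ A.filter (fun v => l v = M) → w v = 0 := by
    intro v hv hv'
    have h1 := (Finset.sum_eq_zero_iff_of_nonneg hnn).1 (by rw [← hlx]; linarith) v hv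
    rcases mul_eq_zero.1 h1 with h | h
    · exact h
    · exact absurd (Finset.mem_filter.2 ⟨hv, by linarith⟩) hv'
  have hset : {v | v ∈ A ∧ l v = M} = ((A.filter fun v => l v = M : Finset 𝔼) : Set 𝔼) := by
    ext; simp
  rw [hset, Finset.mem_convexHull']
  refine ⟨w, fun y hy => hw0 y (Finset.mem_filter.1 hy).1, ?_, ?_⟩
  · rw [← hw1]
    exact Finset.sum_subset (Finset.filter_subset _ _) hzero
  · rw [← hwx]
    exact Finset.sum_subset (Finset.filter_subset _ _) fun v hv hv' => by
      rw [hzero v hv hv', zero_smul]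

lemma eq_of_mem_convexHull_filter (A : Finset 𝔼) (l : 𝔼 →L[ℝ] ℝ) {M : ℝ} {x : 𝔼}
    (hx : x ∈ convexHull ℝ {v | v ∈ A ∧ l v = M}) : x ∈ convexHull ℝ (A : Set 𝔼) ∧ l x = M := by
  refine ⟨convexHull_mono (fun v hv => hv.1) hx, ?_⟩
  have hconv : Convex ℝ {y : 𝔼 | l y = M} :=
    convex_hyperplane (f := l) l.toLinearMap.isLinear M
  exact convexHull_min (fun v hv => hv.2) hconv hx

/-- The face of `conv A + conv B` exposed by `l` is the sum of the hulls of the maximizers of `l`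
in `A` and in `B`; in particular it depends only on these two sets of maximizers. -/
lemma exposed_eq (A B : Finset 𝔼) (l : 𝔼 →L[ℝ] ℝ) {M N : ℝ} (hM : ∀ v ∈ A, l v ≤ M)
    (hM' : ∃ v ∈ A, l v = M) (hN : ∀ v ∈ B, l v ≤ N) (hN' : ∃ v ∈ B, l v = N) :
    {x ∈ convexHull ℝ (A : Set 𝔼) + convexHull ℝ (B : Set 𝔼) |
      ∀ y ∈ convexHull ℝ (A : Set 𝔼) + convexHull ℝ (B : Set 𝔼), l y ≤ l x} =
    convexHull ℝ {v | v ∈ A ∧ l v = M} + convexHull ℝ {v | v ∈ B ∧ l v = N} := by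
  obtain ⟨v, hv, hvM⟩ := hM'
  obtain ⟨w, hw, hwN⟩ := hN'
  ext x
  constructor
  · rintro ⟨⟨p, hp, q, hq, rfl⟩, hmax⟩
    have h1 := hmax (v + w) (Set.add_mem_add (subset_convexHull ℝ _ hv) (subset_convexHull ℝ _ hw))
    obtain ⟨hp1, hp2⟩ := mem_convexHull_filter A l hM hp
    obtain ⟨hq1, hq2⟩ := mem_convexHull_filter B l hN hq
    simp only [map_add] at h1
    exact Set.add_mem_add (hp2 (by linarith)) (hq2 (by linarith))
  · rintro ⟨p, hp, q, hq, rfl⟩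
    obtain ⟨hp1, hp2⟩ := eq_of_mem_convexHull_filter A l hp
    obtain ⟨hq1, hq2⟩ := eq_of_mem_convexHull_filter B l hq
    refine ⟨Set.add_mem_add hp1 hq1, ?_⟩
    rintro _ ⟨p', hp', q', hq', rfl⟩
    have h1 := (mem_convexHull_filter A l hM hp').1
    have h2 := (mem_convexHull_filter B l hN hq').1
    simp only [map_add]
    linarith

/-- The points of `A` and of `B`, as a single family indexed by `A ⊕ B`. -/
def pt (A B : Finset 𝔼) : A ⊕ B → 𝔼 := Sum.elim (fun v => v.1) (fun w => w.1)

/-- The Cayley-type vector of a labelled point: its coordinates other than the `j`-th, together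
with the indicator of the polytope it comes from (`true` for `A`, `false` for `B`). -/
def sliceVec (A B : Finset 𝔼) (j : Fin d) (i : A ⊕ B) : ({c : Fin d // c ≠ j} → ℝ) × (Bool → ℝ) :=
  (fun c => pt A B i c, Pi.single i.isLeft 1)

/-- Right-hand sides for the slice of normal vectors `u` with `u j = s`. A functional
`(x, y) ↦ ∑ c ≠ j, u c * x c - M * y true - N * y false` satisfies the resulting constraints iff
`u` is at most `M` on `A` and at most `N` on `B`. The sign `s = 0` never arises from a face. -/
def sliceRhs (A B : Finset 𝔼) (j : Fin d) (s : SignType) (i : A ⊕ B) : ℝ := -((s : ℝ) * pt A B i j)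

/-- The Minkowski sum of the hulls of the points of `A` and of `B` whose labels lie in `Z`. -/
def labelHull (A B : Finset 𝔼) (Z : Finset (A ⊕ B)) : Set 𝔼 :=
  convexHull ℝ {v | ∃ h : v ∈ A, Sum.inl ⟨v, h⟩ ∈ Z} +
    convexHull ℝ {w | ∃ h : w ∈ B, Sum.inr ⟨w, h⟩ ∈ Z}

/-- A face exposed by `l` with `l eⱼ ≠ 0` is the `labelHull` of a tight set in the `j`-th slice:
after division by `|l eⱼ|`, the functional `l` has `j`-th coordinate `± 1`. -/
lemma exposed_slice (A B : Finset 𝔼) (hA : A.Nonempty) (hB : B.Nonempty) (l : 𝔼 →L[ℝ] ℝ)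
    (j : Fin d) (hj : l (EuclideanSpace.single j 1) ≠ 0) :
    ∃ φ, Feasible (sliceVec A B j)
        (sliceRhs A B j (SignType.sign (l (EuclideanSpace.single j 1)))) φ ∧
      {x ∈ convexHull ℝ (A : Set 𝔼) + convexHull ℝ (B : Set 𝔼) |
        ∀ y ∈ convexHull ℝ (A : Set 𝔼) + convexHull ℝ (B : Set 𝔼), l y ≤ l x} =
      labelHull A B (tight (sliceVec A B j)
        (sliceRhs A B j (SignType.sign (l (EuclideanSpace.single j 1)))) φ) := by
  classical
  set u : Fin d → ℝ := fun c => l (EuclideanSpace.single c 1) with hu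
  rw [show l (EuclideanSpace.single j 1) = u j from rfl] at hj ⊢
  have hl : ∀ x : 𝔼, l x = u j * x j + ∑ c : {c : Fin d // c ≠ j}, u c * x c := by
    intro x
    rw [← Fintype.sum_eq_add_sum_subtype_ne (fun c => u c * x c) j]
    conv_lhs => rw [← (EuclideanSpace.basisFun (Fin d) ℝ).sum_repr x]
    simp [map_sum, u, mul_comm]
  obtain ⟨v, hv, hvmax⟩ := Finset.exists_max_image A l hA
  obtain ⟨w, hw, hwmax⟩ := Finset.exists_max_image B l hB
  let M : Bool → ℝ := fun b => if b then l v else l w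
  have hupos : 0 < |u j| := abs_pos.2 hj
  let φ : Dual ℝ (({c : Fin d // c ≠ j} → ℝ) × (Bool → ℝ)) := |u j|⁻¹ •
    ((∑ c, u c.1 • LinearMap.proj c) ∘ₗ LinearMap.fst ℝ _ _ -
      (∑ b, M b • LinearMap.proj b) ∘ₗ LinearMap.snd ℝ _ _)
  have hφ : ∀ i, φ (sliceVec A B j i) = |u j|⁻¹ * (l (pt A B i) - M i.isLeft) +
      sliceRhs A B j (SignType.sign (u j)) i := by
    intro i
    have h1 : φ (sliceVec A B j i) = |u j|⁻¹ *
        (∑ c : {c : Fin d // c ≠ j}, u c * pt A B i c - M i.isLeft) := by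
      simp only [φ, sliceVec, LinearMap.smul_apply, LinearMap.sub_apply, LinearMap.comp_apply,
        LinearMap.sum_apply, LinearMap.fst_apply, LinearMap.snd_apply, LinearMap.proj_apply,
        smul_eq_mul]
      congr 2
      cases i.isLeft <;> simp
    have h2 : (SignType.sign (u j) : ℝ) = |u j|⁻¹ * u j := by
      rw [eq_inv_mul_iff_mul_eq₀ hupos.ne']
      exact abs_mul_sign (u j)
    rw [h1, hl, sliceRhs, h2]
    ring
  have hle : ∀ i : A ⊕ B, l (pt A B i) ≤ M i.isLeft := by
    rintro (⟨x, hx⟩ | ⟨x, hx⟩)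
    · simpa [pt, M] using hvmax x hx
    · simpa [pt, M] using hwmax x hx
  have hinv : 0 < |u j|⁻¹ := inv_pos.2 hupos
  have htight : ∀ i, i ∈ tight (sliceVec A B j) (sliceRhs A B j (SignType.sign (u j))) φ ↔
      l (pt A B i) = M i.isLeft := by
    intro i
    rw [mem_tight, hφ, add_eq_right, mul_eq_zero, sub_eq_zero]
    simp [hinv.ne']
  refine ⟨φ, fun i => ?_, ?_⟩
  · rw [hφ]
    have := mul_nonneg hinv.le (sub_nonneg.2 (hle i))
    nlinarith
  · rw [exposed_eq A B l hvmax ⟨v, hv, rfl⟩ hwmax ⟨w, hw, rfl⟩, labelHull]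
    simp only [htight]
    simp [pt, M]

/-- Since `A` affinely spans the space, the vectors of a slice span linearly. -/
lemma slice_spans (A B : Finset 𝔼) (hA : A.Nonempty) (hB : B.Nonempty)
    (hspan : vectorSpan ℝ (A : Set 𝔼) = ⊤) (j : Fin d)
    (r : Dual ℝ (({c : Fin d // c ≠ j} → ℝ) × (Bool → ℝ)))
    (hr : ∀ i, r (sliceVec A B j i) = 0) : r = 0 := by
  classical
  obtain ⟨v₀, hv₀⟩ := hA
  obtain ⟨w₀, hw₀⟩ := hB
  let res : 𝔼 →ₗ[ℝ] ({c : Fin d // c ≠ j} → ℝ) :=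
    LinearMap.pi fun c => (EuclideanSpace.proj c.1 : 𝔼 →L[ℝ] ℝ).toLinearMap
  have hres : ∀ x c, res x c = x c.1 := fun x c => rfl
  let f : 𝔼 →ₗ[ℝ] ℝ := r ∘ₗ LinearMap.inl ℝ _ _ ∘ₗ res
  have hdec : ∀ x y, r (x, y) = r (x, 0) + r (0, y) := fun x y => by
    rw [← map_add]; simp
  have hf : ∀ v ∈ A, f v = -r (0, Pi.single true 1) := by
    intro v hv
    have h1 := hr (Sum.inl ⟨v, hv⟩)
    have h2 : sliceVec A B j (Sum.inl ⟨v, hv⟩) = (res v, Pi.single true 1) := rfl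
    rw [h2, hdec] at h1
    have h3 : f v = r (res v, 0) := rfl
    linarith
  have hf0 : f = 0 := by
    have hle : vectorSpan ℝ (A : Set 𝔼) ≤ LinearMap.ker f := by
      rw [vectorSpan_def, Submodule.span_le]
      rintro _ ⟨v, hv, w, hw, rfl⟩
      simp [hf v hv, hf w hw]
    rw [hspan, top_le_iff] at hle
    exact LinearMap.ker_eq_top.1 hle
  have hx : ∀ x, r (x, 0) = 0 := by
    intro x
    have : x = res (WithLp.toLp 2 fun c => if h : c ≠ j then x ⟨c, h⟩ else 0) := by
      ext c
      rw [hres]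
      simp [c.2]
    rw [this]
    exact LinearMap.congr_fun hf0 (WithLp.toLp 2 fun c => if h : c ≠ j then x ⟨c, h⟩ else 0)
  have ht : r (0, Pi.single true 1) = 0 := by
    have := hf v₀ hv₀
    rw [hf0] at this
    simpa using this.symm
  have hfa : r (0, Pi.single false 1) = 0 := by
    have h1 := hr (Sum.inr ⟨w₀, hw₀⟩)
    have h2 : sliceVec A B j (Sum.inr ⟨w₀, hw₀⟩) = (res w₀, Pi.single false 1) := rfl
    rw [h2, hdec, hx, zero_add] at h1
    exact h1
  ext b
  · simp [hx]
  · cases b <;> simp [ht, hfa]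

/-- A proper face is exposed by a functional with some nonzero coordinate, so it comes from one of
the `3 * d` slices; the summand `1` is the polytope itself. -/
lemma totalFaces_le (k : ℕ) (hk : 1 ≤ k) (hd : d = 2 * k + 1) (A B : Finset 𝔼) (hA : A.Nonempty)
    (hB : B.Nonempty) (hspan : vectorSpan ℝ (A : Set 𝔼) = ⊤) :
    totalFaces (convexHull ℝ (A : Set 𝔼) + convexHull ℝ (B : Set 𝔼)) ≤
      1 + 3 * d * (2 ^ (2 * k + 3) * (A.card * B.card * (A.card + B.card) ^ (k - 1))) := by
  classical
  set C := convexHull ℝ (A : Set 𝔼) + convexHull ℝ (B : Set 𝔼) with hC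
  let 𝒵 : Fin d × SignType → Set (Finset (A ⊕ B)) := fun x =>
    {Z | ∃ φ, Feasible (sliceVec A B x.1) (sliceRhs A B x.1 x.2) φ ∧
      tight (sliceVec A B x.1) (sliceRhs A B x.1 x.2) φ = Z}
  have hsub : {F : Set 𝔼 | IsExposed ℝ C F ∧ F.Nonempty} ⊆
      {C} ∪ ⋃ x ∈ (Finset.univ : Finset (Fin d × SignType)), Set.image (labelHull A B) (𝒵 x) := by
    rintro F ⟨hF, hne⟩
    obtain ⟨l, hl⟩ := hF hne
    by_cases h0 : ∀ j, l (EuclideanSpace.single j 1) = 0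
    · left
      have hl0 : ∀ x, l x = 0 := by
        intro x
        rw [← (EuclideanSpace.basisFun (Fin d) ℝ).sum_repr x]
        simp [map_sum, h0]
      rw [Set.mem_singleton_iff, hl]
      simp [hl0]
    · right
      push Not at h0
      obtain ⟨j, hj⟩ := h0
      obtain ⟨φ, hφ, heq⟩ := exposed_slice A B hA hB l j hj
      simp only [Set.mem_iUnion]
      refine ⟨(j, SignType.sign (l (EuclideanSpace.single j 1))), Finset.mem_univ _,
        _, ⟨φ, hφ, rfl⟩, ?_⟩
      rw [hl, ← heq]
  have hcardt : Nat.card {i : A ⊕ B // i.isLeft = true} = A.card := by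
    rw [← Fintype.card_coe A, ← Nat.card_eq_fintype_card]
    exact (Nat.card_congr (Equiv.ofBijective
      (fun v : A => (⟨Sum.inl v, rfl⟩ : {i : A ⊕ B // i.isLeft = true}))
      ⟨fun x y h => by simpa using congrArg Subtype.val h, by rintro ⟨x | x, h⟩ <;> simp at h ⊢⟩)).symm
  have hcardf : Nat.card {i : A ⊕ B // i.isLeft = false} = B.card := by
    rw [← Fintype.card_coe B, ← Nat.card_eq_fintype_card]
    exact (Nat.card_congr (Equiv.ofBijective
      (fun v : B => (⟨Sum.inr v, rfl⟩ : {i : A ⊕ B // i.isLeft = false}))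
      ⟨fun x y h => by simpa using congrArg Subtype.val h, by rintro ⟨x | x, h⟩ <;> simp at h ⊢⟩)).symm
  have hcard : ∀ x, (Set.image (labelHull A B) (𝒵 x)).ncard ≤
      2 ^ (2 * k + 3) * (A.card * B.card * (A.card + B.card) ^ (k - 1)) := by
    intro x
    refine (Set.ncard_image_le (Set.toFinite _)).trans ?_
    have h := ncard_tight_le_of_colored (sliceVec A B x.1) (slice_spans A B hA hB hspan x.1)
      Sum.isLeft (fun b => LinearMap.proj b ∘ₗ LinearMap.snd ℝ _ _) (by
        intro b i
        simp [sliceVec, Pi.single_apply, eq_comm]) (by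
        obtain ⟨v, hv⟩ := hA
        obtain ⟨w, hw⟩ := hB
        rintro (_ | _)
        · exact ⟨Sum.inr ⟨w, hw⟩, rfl⟩
        · exact ⟨Sum.inl ⟨v, hv⟩, rfl⟩) k hk (by
        simp [hd]) (sliceRhs A B x.1 x.2)
    rw [hcardt, hcardf, Fintype.card_sum, Fintype.card_coe, Fintype.card_coe] at h
    exact h
  have hfin : (⋃ x ∈ (Finset.univ : Finset (Fin d × SignType)), Set.image (labelHull A B) (𝒵 x)).Finite :=
    Set.toFinite _
  unfold totalFaces
  refine (Set.ncard_le_ncard hsub ((Set.finite_singleton C).union hfin)).trans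
    ((Set.ncard_union_le _ _).trans ?_)
  rw [Set.ncard_singleton]
  refine Nat.add_le_add_left ((Finset.set_ncard_biUnion_le _ _).trans
    ((Finset.sum_le_card_nsmul _ _ _ fun x _ => hcard x).trans (le_of_eq ?_))) 1
  have : Fintype.card SignType = 3 := rfl
  rw [Finset.card_univ, Fintype.card_prod, this, Fintype.card_fin, smul_eq_mul]
  ring

end Geometry

theorem stmt12 (d : ℕ) (hd : 3 ≤ d) (hodd : Odd d) :
    ∃ c : ℝ, 0 < c ∧
      ∀ V W : Set (EuclideanSpace ℝ (Fin d)),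
        V.Finite → W.Finite →
        adim (convexHull ℝ V) = d → adim (convexHull ℝ W) = d →
        (totalFaces (convexHull ℝ V + convexHull ℝ W) : ℝ) ≤
          c * ((((convexHull ℝ V).extremePoints ℝ).ncard : ℝ) *
                (((convexHull ℝ W).extremePoints ℝ).ncard : ℝ) ^ (d / 2) +
              (((convexHull ℝ W).extremePoints ℝ).ncard : ℝ) *
                (((convexHull ℝ V).extremePoints ℝ).ncard : ℝ) ^ (d / 2)) := by
  obtain ⟨k, hk⟩ := hodd
  have hk1 : 1 ≤ k := by omega
  have hdk : d / 2 = k := by omega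
  refine ⟨1 + 3 * d * (2 ^ (2 * k + 3) * 2 ^ (k - 1)), by positivity, ?_⟩
  intro V W hV hW hdV hdW
  rw [hdk]
  -- a finite set may be replaced by the extreme points of its convex hull
  have hext : ∀ U : Set (EuclideanSpace ℝ (Fin d)), U.Finite → adim (convexHull ℝ U) = d →
      ∃ A : Finset (EuclideanSpace ℝ (Fin d)), A.card = ((convexHull ℝ U).extremePoints ℝ).ncard ∧
        convexHull ℝ (A : Set (EuclideanSpace ℝ (Fin d))) = convexHull ℝ U ∧ A.Nonempty ∧
        vectorSpan ℝ (A : Set (EuclideanSpace ℝ (Fin d))) = ⊤ := by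
    intro U hU hdU
    have hfin : ((convexHull ℝ U).extremePoints ℝ).Finite :=
      hU.subset extremePoints_convexHull_subset
    have hco : ((hfin.toFinset : Finset _) : Set (EuclideanSpace ℝ (Fin d))) =
        (convexHull ℝ U).extremePoints ℝ := hfin.coe_toFinset
    have hhull : convexHull ℝ ((hfin.toFinset : Finset _) : Set (EuclideanSpace ℝ (Fin d))) =
        convexHull ℝ U := by
      rw [hco]
      have h1 := closure_convexHull_extremePoints (hU.isCompact_convexHull (𝕜 := ℝ))
        (convex_convexHull ℝ U)
      rwa [(hfin.isClosed_convexHull (𝕜 := ℝ)).closure_eq] at h1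
    have hspan : vectorSpan ℝ (convexHull ℝ U) = ⊤ := by
      apply Submodule.eq_top_of_finrank_eq
      rw [finrank_euclideanSpace_fin]
      exact hdU
    refine ⟨hfin.toFinset, (Set.ncard_eq_toFinset_card _ hfin).symm, hhull, ?_, ?_⟩
    · by_contra hne
      rw [Finset.not_nonempty_iff_eq_empty] at hne
      rw [hne, Finset.coe_empty, convexHull_empty] at hhull
      rw [← hhull, adim, vectorSpan_empty, finrank_bot] at hdU
      omega
    · rw [← direction_affineSpan, ← affineSpan_convexHull, hhull, direction_affineSpan, hspan]
  obtain ⟨A, hAc, hAh, hAne, hAs⟩ := hext V hV hdV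
  obtain ⟨B, hBc, hBh, hBne, -⟩ := hext W hW hdW
  rw [← hAc, ← hBc, ← hAh, ← hBh]
  have hmain := totalFaces_le k hk1 hk A B hAne hBne hAs
  have hn : (1 : ℝ) ≤ A.card := by exact_mod_cast hAne.card_pos
  have hm : (1 : ℝ) ≤ B.card := by exact_mod_cast hBne.card_pos
  have hmain' : (totalFaces (convexHull ℝ (A : Set (EuclideanSpace ℝ (Fin d))) +
      convexHull ℝ (B : Set (EuclideanSpace ℝ (Fin d)))) : ℝ) ≤
      1 + 3 * d * (2 ^ (2 * k + 3) *
        ((A.card : ℝ) * B.card * ((A.card : ℝ) + B.card) ^ (k - 1))) := by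
    exact_mod_cast hmain
  generalize (A.card : ℝ) = n at *
  generalize (B.card : ℝ) = m at *
  refine hmain'.trans ?_
  have hpow : (n + m) ^ (k - 1) ≤ 2 ^ (k - 1) * (n ^ (k - 1) + m ^ (k - 1)) := by
    have h1 : n + m ≤ 2 * max n m := by linarith [le_max_left n m, le_max_right n m]
    calc (n + m) ^ (k - 1) ≤ (2 * max n m) ^ (k - 1) := by gcongr
      _ = 2 ^ (k - 1) * (max n m) ^ (k - 1) := mul_pow _ _ _
      _ ≤ _ := by
        gcongr
        rcases max_choice n m with h | h <;> rw [h]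
        · linarith [pow_nonneg (by linarith : 0 ≤ m) (k - 1)]
        · linarith [pow_nonneg (by linarith : 0 ≤ n) (k - 1)]
  have hone : 1 ≤ n * m ^ k + m * n ^ k := by
    have h1 : 1 ≤ n * m ^ k := one_le_mul_of_one_le_of_one_le hn (one_le_pow₀ hm)
    have h2 : 0 ≤ m * n ^ k := by positivity
    linarith
  have hprod : n * m * (n + m) ^ (k - 1) ≤ 2 ^ (k - 1) * (n * m ^ k + m * n ^ k) := by
    calc n * m * (n + m) ^ (k - 1)
        ≤ n * m * (2 ^ (k - 1) * (n ^ (k - 1) + m ^ (k - 1))) := by gcongr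
      _ = _ := by
        obtain ⟨t, rfl⟩ : ∃ t, k = t + 1 := ⟨k - 1, by omega⟩
        simp only [Nat.add_sub_cancel]
        ring
  have hfinal : 3 * (d : ℝ) * (2 ^ (2 * k + 3) * (n * m * (n + m) ^ (k - 1))) ≤
      3 * d * (2 ^ (2 * k + 3) * (2 ^ (k - 1) * (n * m ^ k + m * n ^ k))) := by gcongr
  linarith
end

section
/- Let C = conv(S) be the convex hull of a finite set S in E^d, and let Y be a hyperplane such that exactly one point v ∈ S lies strictly on one side of Y while all other points of S lie strictly on the other side. Then every extreme point of the section C ∩ Y lies on an edge (1-dimensional exposed face) of C having v as an endpoint, and is the unique intersection point of that edge with Y; consequently C ∩ Y has at most |S| − 1 extreme points. (Claim used in Section 4.1 to bound the complexity of the section Q̃_i = Q_i ∩ Y.) -/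
/-!
Write `Y = {φ = b}` and, for `x ∈ S \ {v}`, let `p x` be the point where the segment from `v` to `x`
crosses `Y` (`crossPt`).  The cone with apex `v` over `conv (p '' (S \ {v}))` contains `S`, hence
contains `C = conv S`; intersecting it with `Y` gives `C ∩ Y = conv (p '' (S \ {v}))`
(`section_eq_convexHull`).  Extreme points of the section are therefore among the at most
`|S| - 1` points `p x`, which is the counting claim.

An extreme point `q` of the section is not in the convex hull of the other points `p x`, so some
linear functional is strictly smaller at `q` than at each of them.  Adding a multiple of `φ`, which
is constant on `Y`, produces a functional `g` with `g v = g q` (`exists_functional`).  Since `x` lies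
beyond `p x` on the ray from `v`, every `x ∈ S \ {v}` has `g v < g x` unless `p x = q`, that is, unless
`x` lies on the ray from `v` through `q`.  So the face of `C` on which `g` is minimal contains the
segment from `v` to `q` and lies in that ray (`mem_ray_of_face`): it is the required edge.
-/

open Set Pointwise RealInnerProductSpace

section General

variable {V : Type*} [NormedAddCommGroup V] [NormedSpace ℝ V]

/-- The point where the line from `v` to `x` meets the hyperplane `{φ = b}`
(meaningful when `φ v ≠ φ x`). -/
noncomputable def crossPt (φ : V →L[ℝ] ℝ) (b : ℝ) (v x : V) : V :=
  v + ((b - φ v) / (φ x - φ v)) • (x - v)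

/-- The closed ray from `v` through `q`. -/
def rayFrom (v q : V) : Set V := {y | ∃ s : ℝ, 0 ≤ s ∧ y = v + s • (q - v)}

lemma map_crossPt {φ : V →L[ℝ] ℝ} {b : ℝ} {v x : V} (h : φ v < φ x) :
    φ (crossPt φ b v x) = b := by
  have : φ x - φ v ≠ 0 := by linarith
  simp only [crossPt, map_add, map_smul, map_sub, smul_eq_mul]
  field_simp
  ring

lemma eq_of_crossPt {φ : V →L[ℝ] ℝ} {b : ℝ} {v x : V} (hv : φ v < b) (hx : b < φ x) :
    x = v + ((φ x - φ v) / (b - φ v)) • (crossPt φ b v x - v) := by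
  have h1 : φ x - φ v ≠ 0 := by linarith
  have h2 : b - φ v ≠ 0 := by linarith
  have h3 : (φ x - φ v) / (b - φ v) * ((b - φ v) / (φ x - φ v)) = 1 := by field_simp
  rw [crossPt, add_sub_cancel_left, smul_smul, h3, one_smul, add_sub_cancel]

lemma crossPt_mem {φ : V →L[ℝ] ℝ} {b : ℝ} {v x : V} {C : Set V} (hC : Convex ℝ C)
    (hvC : v ∈ C) (hxC : x ∈ C) (hv : φ v < b) (hx : b < φ x) : crossPt φ b v x ∈ C := by
  refine hC.add_smul_sub_mem hvC hxC ⟨?_, ?_⟩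
  · exact div_nonneg (by linarith) (by linarith)
  · rw [div_le_one (by linarith)]; linarith

lemma convex_cone (v : V) {D : Set V} (hD : Convex ℝ D) :
    Convex ℝ {y : V | ∃ s : ℝ, 0 ≤ s ∧ ∃ z ∈ D, y = v + s • (z - v)} := by
  rintro _ ⟨s, hs, z, hz, rfl⟩ _ ⟨t, ht, u, hu, rfl⟩ α β hα hβ hαβ
  have h1 : 0 ≤ α * s := mul_nonneg hα hs
  have h2 : 0 ≤ β * t := mul_nonneg hβ ht
  have hβ' : β = 1 - α := by linarith
  rcases (add_nonneg h1 h2).eq_or_lt with h0 | h0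
  · have e1 : α * s = 0 := by linarith
    have e2 : β * t = 0 := by linarith
    refine ⟨0, le_rfl, z, hz, ?_⟩
    have : α • (v + s • (z - v)) + β • (v + t • (u - v))
        = (α + β) • v + (α * s) • (z - v) + (β * t) • (u - v) := by module
    rw [this, e1, e2, hαβ]; module
  · refine ⟨α * s + β * t, h0.le,
      (α * s / (α * s + β * t)) • z + (β * t / (α * s + β * t)) • u,
      hD hz hu (div_nonneg h1 h0.le) (div_nonneg h2 h0.le) (by field_simp), ?_⟩
    have key : (α * s + β * t) •
        ((α * s / (α * s + β * t)) • z + (β * t / (α * s + β * t)) • u)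
        = (α * s) • z + (β * t) • u := by
      rw [smul_add, smul_smul, smul_smul, mul_div_cancel₀ _ h0.ne', mul_div_cancel₀ _ h0.ne']
    rw [smul_sub (α * s + β * t), key, hβ']
    module

lemma convex_rayFrom (v q : V) : Convex ℝ (rayFrom v q) := by
  have := convex_cone v (convex_singleton (𝕜 := ℝ) q)
  simpa [rayFrom] using this

/-- The section of `conv S` by a hyperplane separating `v` from the rest of `S` is spanned by the
points where the segments from `v` cross the hyperplane. -/
lemma section_eq_convexHull {S : Set V} {φ : V →L[ℝ] ℝ} {b : ℝ} {v : V} (hvS : v ∈ S)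
    (hv : φ v < b) (ho : ∀ x ∈ S, x ≠ v → b < φ x) :
    convexHull ℝ S ∩ {x | φ x = b} = convexHull ℝ (crossPt φ b v '' (S \ {v})) := by
  apply Subset.antisymm
  · rintro y ⟨hyC, hyb : φ y = b⟩
    rcases (S \ {v}).eq_empty_or_nonempty with hT | ⟨x₀, hx₀⟩
    · have : S ⊆ {v} := by rwa [sdiff_eq_empty] at hT
      have hyv : y ∈ ({v} : Set V) := convexHull_min this (convex_singleton v) hyC
      rw [mem_singleton_iff.1 hyv] at hyb
      linarith
    · have hcone := convexHull_min (s := S) ?_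
        (convex_cone v (convex_convexHull ℝ (crossPt φ b v '' (S \ {v}))))
      · obtain ⟨s, hs, z, hz, rfl⟩ := hcone hyC
        have hzb : φ z = b := by
          have : convexHull ℝ (crossPt φ b v '' (S \ {v})) ⊆ {x | φ x = b} := by
            refine convexHull_min ?_ (convex_hyperplane φ.toLinearMap.isLinear b)
            rintro _ ⟨x, ⟨hx, hxv⟩, rfl⟩
            exact map_crossPt (hv.trans (ho x hx hxv))
          exact this hz
        simp only [map_add, map_smul, map_sub, smul_eq_mul, hzb] at hyb
        have hs1 : s = 1 := by
          have : (s - 1) * (b - φ v) = 0 := by linarith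
          rcases mul_eq_zero.1 this with h | h <;> linarith
        simpa [hs1] using hz
      · intro x hx
        by_cases hxv : x = v
        · exact ⟨0, le_rfl, _, subset_convexHull ℝ _ (mem_image_of_mem _ hx₀), by simp [hxv]⟩
        · have hbx := ho x hx hxv
          exact ⟨_, div_nonneg (by linarith) (by linarith), _,
            subset_convexHull ℝ _ (mem_image_of_mem _ ⟨hx, hxv⟩), eq_of_crossPt hv hbx⟩
  · refine convexHull_min ?_ ((convex_convexHull ℝ S).inter
      (convex_hyperplane φ.toLinearMap.isLinear b))
    rintro _ ⟨x, ⟨hx, hxv⟩, rfl⟩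
    have hbx := ho x hx hxv
    exact ⟨crossPt_mem (convex_convexHull ℝ S) (subset_convexHull ℝ S hvS)
      (subset_convexHull ℝ S hx) hv hbx, map_crossPt (hv.trans hbx)⟩

/-- A functional taking equal values at `v` and `q`, and at `q` strictly smaller than at every
other point of the finite set `P` contained in the hyperplane `{φ = b}`. -/
lemma exists_functional {P : Set V} (hP : P.Finite) {φ : V →L[ℝ] ℝ} {b : ℝ} {v q : V}
    (hv : φ v < b) (hPb : ∀ p ∈ P, φ p = b) (hq : q ∈ (convexHull ℝ P).extremePoints ℝ) :
    ∃ g : V →L[ℝ] ℝ, g v = g q ∧ ∀ p ∈ P, p ≠ q → g q < g p := by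
  have hqP : q ∈ P := extremePoints_convexHull_subset hq
  have hnot : q ∉ convexHull ℝ (P \ {q}) := by
    have hc := ((convex_convexHull ℝ P).mem_extremePoints_iff_convex_sdiff.1 hq).2
    intro h
    have hsub : P \ {q} ⊆ convexHull ℝ P \ {q} := fun x hx => ⟨subset_convexHull ℝ P hx.1, hx.2⟩
    exact (convexHull_min hsub hc h).2 rfl
  obtain ⟨f, u, hfq, hf⟩ := geometric_hahn_banach_point_closed (convex_convexHull ℝ (P \ {q}))
    ((hP.subset sdiff_subset).isClosed_convexHull ℝ) hnot
  refine ⟨f + ((f v - f q) / (b - φ v)) • φ, ?_, ?_⟩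
  · have : b - φ v ≠ 0 := by linarith
    simp only [add_apply, smul_apply, smul_eq_mul,
      hPb q hqP]
    field_simp
    ring
  · intro p hp hpq
    have := hf p (subset_convexHull ℝ _ ⟨hp, hpq⟩)
    simp only [add_apply, smul_apply, smul_eq_mul,
      hPb q hqP, hPb p hp]
    linarith

/-- If every point of `S` lies on the ray from `v` through `q` or has `g`-value above
`g v = g q`, then so does every point of the convex hull of `S`. -/
lemma mem_ray_of_face {S : Set V} {g : V →L[ℝ] ℝ} {v q : V} (hg : g v = g q)
    (hS : ∀ x ∈ S, x ∈ rayFrom v q ∨ g v < g x) :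
    ∀ y ∈ convexHull ℝ S, y ∈ rayFrom v q ∨ g v < g y := by
  have hray : ∀ y ∈ rayFrom v q, g y = g v := by
    rintro _ ⟨s, -, rfl⟩
    simp [hg]
  have hconv : Convex ℝ {y | y ∈ rayFrom v q ∨ g v < g y} := by
    intro x hx y hy α β hα hβ hαβ
    rcases hα.eq_or_lt with rfl | hα'
    · obtain rfl : β = 1 := by linarith
      simpa using hy
    rcases hβ.eq_or_lt with rfl | hβ'
    · obtain rfl : α = 1 := by linarith
      simpa using hx
    have hgx : g v ≤ g x := hx.elim (fun h => (hray x h).ge) le_of_lt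
    have hgy : g v ≤ g y := hy.elim (fun h => (hray y h).ge) le_of_lt
    have hβe : β = 1 - α := by linarith
    have hval : g (α • x + β • y) - g v = α * (g x - g v) + β * (g y - g v) := by
      simp only [map_add, map_smul, smul_eq_mul, hβe]
      ring
    rcases hx with hx | hx
    · rcases hy with hy | hy
      · exact Or.inl (convex_rayFrom v q hx hy hα hβ hαβ)
      · right
        have := mul_pos hβ' (sub_pos.2 hy)
        have := mul_nonneg hα (sub_nonneg.2 hgx)
        linarith
    · right
      have := mul_pos hα' (sub_pos.2 hx)
      have := mul_nonneg hβ (sub_nonneg.2 hgy)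
      linarith
  exact fun y hy => convexHull_min hS hconv hy

/-- Existence of the edge, for a hyperplane given by a functional `φ`; being one-dimensional is
expressed by `vectorSpan ℝ e` being spanned by the nonzero vector `q - v`. -/
lemma exists_edge {S : Set V} (hS : S.Finite) {φ : V →L[ℝ] ℝ} {b : ℝ} {v : V} (hvS : v ∈ S)
    (hv : φ v < b) (ho : ∀ x ∈ S, x ≠ v → b < φ x) {q : V}
    (hq : q ∈ (convexHull ℝ S ∩ {x | φ x = b}).extremePoints ℝ) :
    ∃ e : Set V, IsExposed ℝ (convexHull ℝ S) e ∧ (q - v ≠ 0 ∧ vectorSpan ℝ e = ℝ ∙ (q - v)) ∧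
      v ∈ e.extremePoints ℝ ∧ q ∈ e ∧ e ∩ {x | φ x = b} = {q} := by
  have hqC : q ∈ convexHull ℝ S := hq.1.1
  have hqb : φ q = b := hq.1.2
  have hvC : v ∈ convexHull ℝ S := subset_convexHull ℝ S hvS
  rw [section_eq_convexHull hvS hv ho] at hq
  obtain ⟨g, hgv, hg⟩ := exists_functional ((hS.subset sdiff_subset).image _) hv (b := b) (φ := φ)
    (by
      rintro _ ⟨x, ⟨hx, hxv⟩, rfl⟩
      exact map_crossPt (hv.trans (ho x hx hxv))) hq
  have hdich := mem_ray_of_face (S := S) hgv (by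
    intro x hx
    by_cases hxv : x = v
    · exact Or.inl ⟨0, le_rfl, by simp [hxv]⟩
    have hbx := ho x hx hxv
    have heq := eq_of_crossPt hv hbx
    have hpos : 0 < (φ x - φ v) / (b - φ v) := div_pos (by linarith) (by linarith)
    by_cases hpq : crossPt φ b v x = q
    · rw [hpq] at heq
      exact Or.inl ⟨_, hpos.le, heq⟩
    · right
      have h1 := hg _ (mem_image_of_mem _ ⟨hx, hxv⟩) hpq
      have h2 : g x = g v + (φ x - φ v) / (b - φ v) * (g (crossPt φ b v x) - g v) := by
        conv_lhs => rw [heq]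
        simp only [map_add, map_smul, map_sub, smul_eq_mul]
      rw [h2]
      have := mul_pos hpos (sub_pos.2 (hgv.trans_lt h1))
      linarith)
  have hmin : ∀ y ∈ convexHull ℝ S, g v ≤ g y := by
    intro y hy
    rcases hdich y hy with ⟨s, -, rfl⟩ | h
    · simp [hgv]
    · exact h.le
  set e : Set V := {x ∈ convexHull ℝ S | g x = g v} with he
  have heray : ∀ y ∈ e, y ∈ rayFrom v q := fun y hy =>
    (hdich y hy.1).resolve_right hy.2.not_gt
  have hve : v ∈ e := ⟨hvC, rfl⟩
  have hqe : q ∈ e := ⟨hqC, hgv.symm⟩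
  have hφray : ∀ s : ℝ, φ (v + s • (q - v)) = φ v + s * (b - φ v) := by
    intro s
    simp [hqb]
  have hqv : q - v ≠ 0 := by
    intro h
    rw [sub_eq_zero.1 h] at hqb
    linarith
  refine ⟨e, fun _ => ⟨-g, ?_⟩, ⟨hqv, ?_⟩, ?_, hqe, ?_⟩
  · ext x
    simp only [he, mem_ofPred_eq, neg_apply, neg_le_neg_iff]
    exact and_congr_right fun hx => ⟨fun h y hy => h.trans_le (hmin y hy),
      fun h => le_antisymm (h v hvC) (hmin x hx)⟩
  · rw [vectorSpan_eq_span_vsub_set_right ℝ hve]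
    apply le_antisymm
    · rw [Submodule.span_le]
      rintro _ ⟨y, hy, rfl⟩
      obtain ⟨s, -, rfl⟩ := heray y hy
      simpa using Submodule.smul_mem _ s (Submodule.mem_span_singleton_self (q - v))
    · rw [Submodule.span_singleton_le_iff_mem]
      exact Submodule.subset_span ⟨q, hqe, rfl⟩
  -- `φ` attains its minimum over the ray only at the apex `v`.
  · refine mem_extremePoints.2 ⟨hve, ?_⟩
    rintro x hx y hy ⟨α, β, hα, hβ, hαβ, hxy⟩
    obtain ⟨s, hs, rfl⟩ := heray x hx
    obtain ⟨t, ht, rfl⟩ := heray y hy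
    have h := congrArg φ hxy
    rw [map_add, map_smul, map_smul, hφray, hφray, smul_eq_mul, smul_eq_mul] at h
    have hβe : β = 1 - α := by linarith
    have h' : (α * s + β * t) * (b - φ v) = 0 := by
      rw [hβe] at h ⊢
      linarith
    have h0 : α * s + β * t = 0 := by
      rcases mul_eq_zero.1 h' with h | h
      · exact h
      · linarith
    have h1 := mul_nonneg hα.le hs
    have h2 := mul_nonneg hβ.le ht
    have hs0 : s = 0 := (mul_eq_zero.1 (by linarith : α * s = 0)).resolve_left hα.ne'
    have ht0 : t = 0 := (mul_eq_zero.1 (by linarith : β * t = 0)).resolve_left hβ.ne'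
    simp [hs0, ht0]
  · refine Subset.antisymm ?_ (singleton_subset_iff.2 ⟨hqe, hqb⟩)
    rintro y ⟨hy, hyb : φ y = b⟩
    obtain ⟨s, -, rfl⟩ := heray y hy
    rw [hφray] at hyb
    have hs1 : s = 1 := by
      have : (s - 1) * (b - φ v) = 0 := by linarith
      rcases mul_eq_zero.1 this with h | h <;> linarith
    simp [hs1]

end General

theorem stmt17 (d : ℕ)
    (S : Set (EuclideanSpace ℝ (Fin d))) (hS : S.Finite)
    (w : EuclideanSpace ℝ (Fin d)) (b : ℝ) (hw : w ≠ 0)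
    (v : EuclideanSpace ℝ (Fin d)) (hv : v ∈ S)
    (hvside : ⟪v, w⟫ < b)
    (hother : ∀ x ∈ S, x ≠ v → b < ⟪x, w⟫) :
    (∀ q ∈ (convexHull ℝ S ∩ {x | ⟪x, w⟫ = b}).extremePoints ℝ,
      ∃ e : Set (EuclideanSpace ℝ (Fin d)),
        IsExposed ℝ (convexHull ℝ S) e ∧ adim e = 1 ∧
        v ∈ e.extremePoints ℝ ∧ q ∈ e ∧
        e ∩ {x | ⟪x, w⟫ = b} = {q}) ∧
    ((convexHull ℝ S ∩ {x | ⟪x, w⟫ = b}).extremePoints ℝ).ncard ≤ S.ncard - 1 := by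
  have hφ : ∀ x, innerSL ℝ w x = ⟪x, w⟫ := fun x => by
    rw [innerSL_apply_apply, real_inner_comm]
  have hset : {x : EuclideanSpace ℝ (Fin d) | ⟪x, w⟫ = b} = {x | innerSL ℝ w x = b} := by
    simp only [hφ]
  have hv' : innerSL ℝ w v < b := by rwa [hφ]
  have ho' : ∀ x ∈ S, x ≠ v → b < innerSL ℝ w x := by simpa only [hφ] using hother
  rw [hset]
  refine ⟨fun q hq => ?_, ?_⟩
  · obtain ⟨e, h1, ⟨hne, h2⟩, h3⟩ := exists_edge hS hv hv' ho' hq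
    exact ⟨e, h1, by rw [adim, h2, finrank_span_singleton hne], h3⟩
  · rw [section_eq_convexHull hv hv' ho', ← ncard_sdiff_singleton_of_mem hv]
    have hT : (S \ {v}).Finite := hS.subset sdiff_subset
    exact (ncard_le_ncard extremePoints_convexHull_subset (hT.image _)).trans (ncard_image_le hT)
end
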